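/- Let F be a Minkowski norm on ℝⁿ, let Ω ⊆ ℝⁿ be an open set with smooth boundary such that Ω^c is bounded, let 1 < p < n, and let u_p be the C¹ weak solution of div(F(∇u)^{p−1} F_ξ(∇u)) = F(∇u)^p in Ω with u_p = 0 on ∂Ω and u_p → +∞ at infinity. Let R > 0 be such that for every x ∈ ∂Ω there exists a Wulff shape W_R(x₀) ⊆ Ω^c with x ∈ ∂W_R(x₀). Then F(∇u_p(x)) ≤ (n−p)/R for every x in the closure of Ω. -/

import Mathlib

open MeasureTheory Filter Topology Metric Set
open scoped RealInnerProductSpace NNReal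

noncomputable section

abbrev En (n : ℕ) := EuclideanSpace ℝ (Fin n)

/-- A Minkowski norm on ℝⁿ: a norm (convex, even, 1-homogeneous, positive away from 0)
which is smooth away from the origin and whose Hessian of `F²/2` is positive definite
on `ℝⁿ \ {0}`. -/
structure MinkowskiNorm (n : ℕ) where
  F : En n → ℝ
  convexOn : ConvexOn ℝ Set.univ F
  even : ∀ ξ, F (-ξ) = F ξ
  homog : ∀ c : ℝ, 0 ≤ c → ∀ ξ, F (c • ξ) = c * F ξ
  pos : ∀ ξ : En n, ξ ≠ 0 → 0 < F ξ
  smooth : ContDiffOn ℝ (⊤ : ℕ∞) F {(0 : En n)}ᶜ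
  elliptic : ∀ ξ : En n, ξ ≠ 0 → ∀ v : En n, v ≠ 0 →
    0 < fderiv ℝ (fun x => fderiv ℝ (fun y => F y ^ 2 / 2) x) ξ v v

/-- Locally Lipschitz on a set (i.e. `C^{0,1}_loc`). -/
def LocLipOn {n : ℕ} (f : En n → ℝ) (s : Set (En n)) : Prop :=
  ∀ x ∈ s, ∃ (K : ℝ≥0) (t : Set (En n)), t ∈ nhdsWithin x s ∧ LipschitzOnWith K f t

/-- Weak solution of `div(F_ξ(∇u)) = F(∇u)` in `Ω` in the sense of Huisken–Ilmanen's
minimization principle. -/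
def IsWeakSolIAMCF {n : ℕ} (N : MinkowskiNorm n) (Ω : Set (En n)) (u : En n → ℝ) : Prop :=
  LocLipOn u Ω ∧
  ∀ K : Set (En n), IsCompact (closure K) → closure K ⊆ Ω →
    ∀ φ : En n → ℝ, LocLipOn φ Ω → (∀ x ∈ Ω \ K, φ x = u x) →
      (∫ x in K, (N.F (gradient u x) + u x * N.F (gradient u x))) ≤
        ∫ x in K, (N.F (gradient φ x) + φ x * N.F (gradient u x))

/-- Weak subsolution: the minimization inequality holds for competitors `φ ≤ u`. -/
def IsWeakSubSolIAMCF {n : ℕ} (N : MinkowskiNorm n) (Ω : Set (En n)) (u : En n → ℝ) : Prop :=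
  LocLipOn u Ω ∧
  ∀ K : Set (En n), IsCompact (closure K) → closure K ⊆ Ω →
    ∀ φ : En n → ℝ, LocLipOn φ Ω → (∀ x ∈ Ω \ K, φ x = u x) → (∀ x ∈ Ω, φ x ≤ u x) →
      (∫ x in K, (N.F (gradient u x) + u x * N.F (gradient u x))) ≤
        ∫ x in K, (N.F (gradient φ x) + φ x * N.F (gradient u x))

/-- Weak supersolution: the minimization inequality holds for competitors `φ ≥ u`. -/
def IsWeakSuperSolIAMCF {n : ℕ} (N : MinkowskiNorm n) (Ω : Set (En n)) (u : En n → ℝ) : Prop :=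
  LocLipOn u Ω ∧
  ∀ K : Set (En n), IsCompact (closure K) → closure K ⊆ Ω →
    ∀ φ : En n → ℝ, LocLipOn φ Ω → (∀ x ∈ Ω \ K, φ x = u x) → (∀ x ∈ Ω, u x ≤ φ x) →
      (∫ x in K, (N.F (gradient u x) + u x * N.F (gradient u x))) ≤
        ∫ x in K, (N.F (gradient φ x) + φ x * N.F (gradient u x))

/-- A smooth compactly supported test function on `Ω`. -/
def IsTestFun {n : ℕ} (Ω : Set (En n)) (ψ : En n → ℝ) : Prop :=
  ContDiff ℝ (⊤ : ℕ∞) ψ ∧ HasCompactSupport ψ ∧ tsupport ψ ⊆ Ω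

/-- Weak solution of the Finsler `p`-Laplace equation `div(F(∇v)^{p-1} F_ξ(∇v)) = 0` in `Ω`. -/
def IsWeakPHarmonic {n : ℕ} (N : MinkowskiNorm n) (Ω : Set (En n)) (p : ℝ)
    (v : En n → ℝ) : Prop :=
  ∀ ψ : En n → ℝ, IsTestFun Ω ψ →
    (∫ x in Ω, N.F (gradient v x) ^ (p - 1) *
      ⟪gradient N.F (gradient v x), gradient ψ x⟫) = 0

/-- Weak solution of `div(F(∇u)^{p-1} F_ξ(∇u)) = F(∇u)^p` in `Ω`. -/
def IsWeakPSol {n : ℕ} (N : MinkowskiNorm n) (Ω : Set (En n)) (p : ℝ)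
    (u : En n → ℝ) : Prop :=
  ∀ ψ : En n → ℝ, IsTestFun Ω ψ →
    (∫ x in Ω, N.F (gradient u x) ^ (p - 1) *
      ⟪gradient N.F (gradient u x), gradient ψ x⟫) =
      - ∫ x in Ω, N.F (gradient u x) ^ p * ψ x

/-- The polar (dual) norm `F^o(x) = sup_{ξ ≠ 0} ⟨ξ, x⟩ / F(ξ)`. -/
def polarF {n : ℕ} (N : MinkowskiNorm n) (x : En n) : ℝ :=
  sSup {c : ℝ | ∃ ξ : En n, ξ ≠ 0 ∧ c = ⟪ξ, x⟫ / N.F ξ}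

/-- The Wulff shape of radius `r` centered at `x₀`: `{x : F^o(x - x₀) < r}`. -/
def Wulff {n : ℕ} (N : MinkowskiNorm n) (r : ℝ) (x₀ : En n) : Set (En n) :=
  {x | polarF N (x - x₀) < r}

/-- `Ω` is an open set with smooth boundary: it is a smooth sublevel set of a smooth
function with nonvanishing gradient on the boundary. -/
def HasSmoothBoundary {n : ℕ} (Ω : Set (En n)) : Prop :=
  ∃ f : En n → ℝ, ContDiff ℝ (⊤ : ℕ∞) f ∧ Ω = {x | f x < 0} ∧
    ∀ x ∈ frontier Ω, fderiv ℝ f x ≠ 0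

/-- `C¹` on `s` with locally Hölder continuous gradient (i.e. `C^{1,α}_loc`). -/
def C1LocHolderOn {n : ℕ} (v : En n → ℝ) (s : Set (En n)) : Prop :=
  ContDiffOn ℝ 1 v s ∧
  ∀ x ∈ s, ∃ (α C : ℝ≥0), 0 < α ∧ (α : ℝ) ≤ 1 ∧
    ∃ t ∈ nhdsWithin x s, HolderOnWith C α (fun y => gradient v y) t

/-- Divergence of a vector field on `ℝⁿ`. -/
def divg {n : ℕ} (V : En n → En n) (x : En n) : ℝ :=
  ∑ i : Fin n, fderiv ℝ V x (EuclideanSpace.single i 1) i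

/-! The function `v = e^{-u / (p - 1)}` solves the Finsler `p`-Laplace equation
`div(F(∇v)^{p-1} F_ξ(∇v)) = 0` in `Ω`, equals `1` on `∂Ω` and tends to `0` at infinity. Below it lie
the fundamental solutions `(F^o(· - x₀) / R)^{-(n-p)/(p-1)}` centered at the touching Wulff shapes;
they control how fast `v` decays away from a boundary point. Comparing `v` with its translates
carries this control from the boundary to all of `Ω`, and gives the Lipschitz estimate
`u y - u x ≤ (n - p) / R * F^o(y - x)`. Its infinitesimal form is the bound on the gradient, since
`F` is the polar of `F^o`. -/

section TangentCone

variable {E : Type*} [NormedAddCommGroup E] [NormedSpace ℝ E] {s : Set E} {f P : E → ℝ}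
  {f' : E →L[ℝ] ℝ} {x d : E}

lemma isClosed_posTangentConeAt : IsClosed (posTangentConeAt s x) := by
  rw [posTangentConeAt, tangentConeAt_eq_biInter_closure]
  exact isClosed_biInter fun _ _ => isClosed_closure

lemma apply_le_of_mem_posTangentConeAt (hf : HasFDerivWithinAt f f' s x) (hP : Continuous P)
    (hPsmul : ∀ c : ℝ, 0 ≤ c → ∀ e, P (c • e) = c * P e)
    (h : ∀ y ∈ s, f y - f x ≤ P (y - x)) (hd : d ∈ posTangentConeAt s x) : f' d ≤ P d := by
  obtain ⟨ι, l, hl, c, e, he, hes, hce⟩ := exists_fun_of_mem_tangentConeAt hd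
  refine le_of_tendsto_of_tendsto (hf.lim he hes hce) ((hP.tendsto d).comp hce) ?_
  filter_upwards [hes] with i hi
  have hincr := h (x + e i) hi
  rw [add_sub_cancel_left] at hincr
  simp only [Function.comp_apply, NNReal.smul_def, smul_eq_mul, hPsmul (c i) (c i).coe_nonneg]
  gcongr

lemma apply_le_of_mem_posTangentConeAt_or_neg_mem (hf : HasFDerivWithinAt f f' s x)
    (hP : Continuous P) (hPsmul : ∀ c : ℝ, 0 ≤ c → ∀ e, P (c • e) = c * P e)
    (hforward : ∀ y ∈ s, f y - f x ≤ P (y - x)) (hbackward : ∀ y ∈ s, f x - f y ≤ P (x - y))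
    (hd : d ∈ posTangentConeAt s x ∨ -d ∈ posTangentConeAt s x) : f' d ≤ P d := by
  rcases hd with hd | hd
  · exact apply_le_of_mem_posTangentConeAt hf hP hPsmul hforward hd
  · have hneg := apply_le_of_mem_posTangentConeAt (P := fun e => P (-e)) hf.neg (by fun_prop)
      (fun c hc e => by rw [← smul_neg, hPsmul c hc]) (fun y hy => ?_) hd
    · simpa using hneg
    · simpa [neg_add_eq_sub] using hbackward y hy

lemma mem_posTangentConeAt_lt_of_apply_neg (hf : HasFDerivAt f f' x) (hd : f' d < 0) :
    d ∈ posTangentConeAt {y | f y < f x} x := by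
  refine mem_posTangentConeAt_of_frequently_mem (Eventually.frequently ?_)
  filter_upwards [(hf.hasLineDerivAt d).tendsto_slope_zero_right.eventually_lt_const hd,
    self_mem_nhdsWithin] with t ht (htpos : 0 < t)
  simpa [mul_neg_iff, htpos, htpos.not_gt] using ht

lemma mem_posTangentConeAt_lt_of_apply_nonpos (hf : HasFDerivAt f f' x) (hf' : f' ≠ 0)
    (hd : f' d ≤ 0) : d ∈ posTangentConeAt {y | f y < f x} x := by
  obtain ⟨e, he⟩ : ∃ e, f' e < 0 := by
    obtain ⟨e, he⟩ := ContinuousLinearMap.exists_ne_zero hf'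
    rcases he.lt_or_gt with he | he
    · exact ⟨e, he⟩
    · exact ⟨-e, by simpa using he⟩
  have hlim : Tendsto (fun t : ℝ => d + t • e) (𝓝[>] 0) (𝓝 d) := by
    have hcont : Continuous fun t : ℝ => d + t • e := by fun_prop
    simpa using (hcont.tendsto 0).mono_left nhdsWithin_le_nhds
  refine isClosed_posTangentConeAt.mem_of_tendsto hlim ?_
  filter_upwards [self_mem_nhdsWithin] with t (ht : 0 < t)
  refine mem_posTangentConeAt_lt_of_apply_neg hf ?_
  rw [map_add, map_smul, smul_eq_mul]
  linarith [mul_neg_of_pos_of_neg ht he]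

end TangentCone

section HomogeneousFunction

variable {E : Type*} [NormedAddCommGroup E] [NormedSpace ℝ E] {f : E → ℝ}

lemma fderiv_smul_of_homogeneous (hf : ∀ c : ℝ, 0 ≤ c → ∀ x, f (c • x) = c * f x) {c : ℝ}
    (hc : 0 < c) (x : E) : fderiv ℝ f (c • x) = fderiv ℝ f x := by
  have hscale : (f <| c • ·) = c • f := funext fun y => hf c hc.le y
  have h := fderiv_comp_smul (𝕜 := ℝ) (f := f) (x := x) c
  rw [hscale, fderiv_const_smul_field, Pi.smul_apply] at h
  exact (smul_right_injective _ hc.ne' h).symm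

lemma fderiv_apply_self_of_homogeneous (hf : ∀ c : ℝ, 0 ≤ c → ∀ x, f (c • x) = c * f x) {x : E}
    (hd : DifferentiableAt ℝ f x) : fderiv ℝ f x x = f x := by
  have hline : HasDerivAt (fun t : ℝ => f (t • x)) (fderiv ℝ f x x) 1 := by
    have hray : HasDerivAt (fun t : ℝ => t • x) x 1 := by
      simpa using (hasDerivAt_id (1 : ℝ)).smul_const x
    refine HasFDerivAt.comp_hasDerivAt (1 : ℝ) ?_ hray
    simpa using hd.hasFDerivAt
  have hlinear : HasDerivAt (fun t : ℝ => f (t • x)) (f x) 1 := by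
    refine HasDerivAt.congr_of_eventuallyEq (by simpa using hasDerivAt_mul_const (f x)) ?_
    filter_upwards [lt_mem_nhds one_pos] with t ht using hf t ht.le x
  exact hline.unique hlinear

lemma exists_pos_mul_norm_le_of_homogeneous [FiniteDimensional ℝ E]
    (hf : ∀ c : ℝ, 0 ≤ c → ∀ x, f (c • x) = c * f x) (hcont : Continuous f)
    (hpos : ∀ x, x ≠ 0 → 0 < f x) : ∃ c, 0 < c ∧ ∀ x, c * ‖x‖ ≤ f x := by
  have hzero : f 0 = 0 := by simpa using hf 0 le_rfl 0
  obtain ⟨c, hc, hle⟩ : ∃ c, 0 < c ∧ ∀ x ∈ sphere (0 : E) 1, c ≤ f x :=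
    (isCompact_sphere 0 1).exists_forall_le' hcont.continuousOn fun x hx =>
      hpos x (ne_zero_of_mem_unit_sphere ⟨x, hx⟩)
  refine ⟨c, hc, fun x => ?_⟩
  rcases eq_or_ne x 0 with rfl | hx
  · simp [hzero]
  have hunit := hle (‖x‖⁻¹ • x) (by simp [norm_smul, norm_ne_zero_iff.2 hx])
  rwa [hf _ (by positivity), le_inv_mul_iff₀ (norm_pos_iff.2 hx), mul_comm] at hunit

end HomogeneousFunction

section Line

variable {E : Type*} [NormedAddCommGroup E] [NormedSpace ℝ E] {f : E → ℝ} {x v : E}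

lemma hasDerivAt_comp_line {t : ℝ} (hf : DifferentiableAt ℝ f (x + t • v)) :
    HasDerivAt (fun s : ℝ => f (x + s • v)) (fderiv ℝ f (x + t • v) v) t :=
  hf.hasFDerivAt.comp_hasDerivAt t (by simpa using ((hasDerivAt_id t).smul_const v).const_add x)

lemma fderiv_fderiv_apply_eq_zero_of_eventually_const (hf : ContDiffAt ℝ 2 f x) {c : ℝ}
    (hconst : ∀ᶠ t : ℝ in 𝓝 0, f (x + t • v) = c) :
    fderiv ℝ (fderiv ℝ f) x v v = 0 := by
  have hx : x + (0 : ℝ) • v = x := by simp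
  have hline : Tendsto (fun t : ℝ => x + t • v) (𝓝 0) (𝓝 x) := by
    have hcont : Continuous fun t : ℝ => x + t • v := by fun_prop
    simpa using hcont.tendsto 0
  have hfirst : ∀ᶠ t : ℝ in 𝓝 0, fderiv ℝ f (x + t • v) v = 0 := by
    filter_upwards [hline.eventually (hf.eventually (by simp)), hconst.eventually_nhds]
      with t hft hct
    exact (hasDerivAt_comp_line (hft.differentiableAt two_ne_zero)).unique
      ((hasDerivAt_const t c).congr_of_eventuallyEq hct)
  have hfderiv : DifferentiableAt ℝ (fderiv ℝ f) x :=
    (hf.fderiv_right (m := 1) one_add_one_eq_two.le).differentiableAt one_ne_zero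
  have hsecond : DifferentiableAt ℝ (fun y => fderiv ℝ f y v) (x + (0 : ℝ) • v) := by
    rw [hx]
    exact hfderiv.clm_apply (differentiableAt_const v)
  have hzero := (hasDerivAt_comp_line hsecond).unique
    ((hasDerivAt_const (0 : ℝ) (0 : ℝ)).congr_of_eventuallyEq hfirst)
  rw [hx, fderiv_clm_apply hfderiv (differentiableAt_const v)] at hzero
  simpa using hzero

end Line

lemma contDiff_of_forall_mem_tsupport {E : Type*} [NormedAddCommGroup E] [NormedSpace ℝ E]
    {k : WithTop ℕ∞} {f : E → ℝ} (h : ∀ x ∈ tsupport f, ContDiffAt ℝ k f x) :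
    ContDiff ℝ k f := by
  refine contDiff_iff_contDiffAt.2 fun x => ?_
  by_cases hx : x ∈ tsupport f
  · exact h x hx
  · exact contDiffAt_const.congr_of_eventuallyEq (notMem_tsupport_iff_eventuallyEq.1 hx)

section Gradient

variable {E : Type*} [NormedAddCommGroup E] [InnerProductSpace ℝ E] [CompleteSpace E]
  {f g : E → ℝ} {f' g' x : E}

lemma gradient_eq_zero_of_notMem_tsupport (hx : x ∉ tsupport f) : gradient f x = 0 := by
  rw [gradient, fderiv_of_notMem_tsupport ℝ hx, map_zero]

lemma tsupport_gradient_subset (f : E → ℝ) : tsupport (gradient f) ⊆ tsupport f :=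
  closure_minimal (fun _ hx => by_contra fun hx' => hx (gradient_eq_zero_of_notMem_tsupport hx'))
    (isClosed_tsupport f)

lemma continuousOn_gradient_of_isOpen {U : Set E} (hU : IsOpen U) (hf : ContDiffOn ℝ 1 f U) :
    ContinuousOn (gradient f) U :=
  (InnerProductSpace.toDual ℝ E).symm.continuous.comp_continuousOn
    (hf.continuousOn_fderiv_of_isOpen hU le_rfl)

lemma hasGradientAt_of_contDiffOn {U : Set E} (hU : IsOpen U) (hf : ContDiffOn ℝ 1 f U)
    (hx : x ∈ U) : HasGradientAt f (gradient f x) x :=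
  ((hf.contDiffAt (hU.mem_nhds hx)).differentiableAt one_ne_zero).hasGradientAt

lemma hasGradientAt_sub (hf : HasGradientAt f f' x) (hg : HasGradientAt g g' x) :
    HasGradientAt (fun y => f y - g y) (f' - g') x := by
  rw [hasGradientAt_iff_hasFDerivAt, map_sub]
  exact hf.hasFDerivAt.sub hg.hasFDerivAt

lemma hasGradientAt_mul (hf : HasGradientAt f f' x) (hg : HasGradientAt g g' x) :
    HasGradientAt (fun y => f y * g y) (f x • g' + g x • f') x := by
  rw [hasGradientAt_iff_hasFDerivAt, map_add, map_smul, map_smul]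
  exact hf.hasFDerivAt.mul hg.hasFDerivAt

lemma hasGradientAt_comp {φ : ℝ → ℝ} {c : ℝ} (hφ : HasDerivAt φ c (f x))
    (hf : HasGradientAt f f' x) : HasGradientAt (fun y => φ (f y)) (c • f') x := by
  rw [hasGradientAt_iff_hasFDerivAt, map_smul]
  exact hφ.comp_hasFDerivAt x hf.hasFDerivAt

lemma gradient_const_mul (c : ℝ) (f : E → ℝ) (x : E) :
    gradient (fun y => c * f y) x = c • gradient f x := by
  have hfderiv := congrFun (fderiv_const_smul_field (𝕜 := ℝ) (R := ℝ) (f := f) c) x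
  simp only [Pi.smul_def, smul_eq_mul] at hfderiv
  rw [gradient, gradient, hfderiv, map_smul]

lemma gradient_comp_add_right (f : E → ℝ) (a x : E) :
    gradient (fun y => f (y + a)) x = gradient f (x + a) := by
  rw [gradient, gradient, fderiv_comp_add_right]

end Gradient

lemma abs_integral_inner_gradient_add_mul_le {E : Type*} [NormedAddCommGroup E]
    [InnerProductSpace ℝ E] [CompleteSpace E] [MeasurableSpace E] [BorelSpace E] {μ : Measure E}
    [IsFiniteMeasureOnCompacts μ] {ψ : E → ℝ} {K : Set E} (hK : IsCompact K) (hψK : tsupport ψ ⊆ K)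
    {X : E → E} {Y : E → ℝ} (hX : ContinuousOn X K) (hY : ContinuousOn Y K) {ε : ℝ}
    (hval : ∀ x, |ψ x| ≤ ε) (hgrad : ∀ x, ‖gradient ψ x‖ ≤ ε) :
    |∫ x, (⟪X x, gradient ψ x⟫ + Y x * ψ x) ∂μ| ≤ ε * ∫ x in K, (‖X x‖ + |Y x|) ∂μ := by
  rw [← setIntegral_eq_integral_of_forall_compl_eq_zero (s := K), ← integral_const_mul,
    ← Real.norm_eq_abs]
  · refine norm_integral_le_of_norm_le
      (((hX.norm.add hY.abs).integrableOn_compact hK).const_mul ε) (.of_forall fun x => ?_)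
    calc ‖⟪X x, gradient ψ x⟫ + Y x * ψ x‖
        ≤ ‖X x‖ * ‖gradient ψ x‖ + |Y x| * |ψ x| := by
          rw [← abs_mul]
          exact (norm_add_le _ _).trans (add_le_add_left (norm_inner_le_norm _ _) _)
      _ ≤ ‖X x‖ * ε + |Y x| * ε := by gcongr <;> apply_assumption
      _ = ε * (‖X x‖ + |Y x|) := by ring
  · intro x hx
    have hxψ : x ∉ tsupport ψ := fun h => hx (hψK h)
    simp [gradient_eq_zero_of_notMem_tsupport hxψ, image_eq_zero_of_notMem_tsupport hxψ]

/-- `C¹` test functions on `U`. The truncated differences that are tested in the comparison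
principle are no smoother than this. -/
structure IsC1TestFun {E : Type*} [NormedAddCommGroup E] [NormedSpace ℝ E] (U : Set E)
    (ψ : E → ℝ) : Prop where
  contDiff : ContDiff ℝ 1 ψ
  hasCompactSupport : HasCompactSupport ψ
  tsupport_subset : tsupport ψ ⊆ U

namespace IsC1TestFun

variable {E : Type*} [NormedAddCommGroup E] [InnerProductSpace ℝ E] {U V : Set E} {ψ : E → ℝ}

lemma mono (hψ : IsC1TestFun U ψ) (hUV : U ⊆ V) : IsC1TestFun V ψ :=
  ⟨hψ.contDiff, hψ.hasCompactSupport, hψ.tsupport_subset.trans hUV⟩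

lemma comp_add_right (hψ : IsC1TestFun U ψ) (a : E) :
    IsC1TestFun {x | x + a ∈ U} fun x => ψ (x + a) where
  contDiff := hψ.contDiff.comp (by fun_prop)
  hasCompactSupport := hψ.hasCompactSupport.comp_homeomorph (Homeomorph.addRight a)
  tsupport_subset := by
    have htsupport := tsupport_comp_eq_preimage ψ (Homeomorph.addRight a)
    exact htsupport.subset.trans (preimage_mono hψ.tsupport_subset)

lemma mul_left (hψ : IsC1TestFun U ψ) (hU : IsOpen U) {a : E → ℝ} (ha : ContDiffOn ℝ 1 a U) :
    IsC1TestFun U fun x => a x * ψ x := by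
  have htsupport : tsupport (fun x => a x * ψ x) ⊆ tsupport ψ := tsupport_mul_subset_right
  refine ⟨contDiff_of_forall_mem_tsupport fun x hx => ?_, hψ.hasCompactSupport.mul_left,
    htsupport.trans hψ.tsupport_subset⟩
  exact (ha.contDiffAt (hU.mem_nhds (hψ.tsupport_subset (htsupport hx)))).mul
    hψ.contDiff.contDiffAt

lemma eq_zero (hψ : IsC1TestFun U ψ) {x : E} (hx : x ∉ U) : ψ x = 0 :=
  image_eq_zero_of_notMem_tsupport fun h => hx (hψ.tsupport_subset h)

lemma continuous_mul (hψ : IsC1TestFun U ψ) (hU : IsOpen U) {Y : E → ℝ}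
    (hY : ContinuousOn Y U) : Continuous fun x => Y x * ψ x :=
  continuous_of_tsupport fun _ hx =>
    (hY.mul hψ.contDiff.continuous.continuousOn).continuousAt
      (hU.mem_nhds (hψ.tsupport_subset (tsupport_mul_subset_right hx)))

lemma integrable_mul [MeasurableSpace E] [BorelSpace E] {μ : Measure E}
    [IsFiniteMeasureOnCompacts μ] (hψ : IsC1TestFun U ψ) (hU : IsOpen U) {Y : E → ℝ}
    (hY : ContinuousOn Y U) : Integrable (fun x => Y x * ψ x) μ :=
  (hψ.continuous_mul hU hY).integrable_of_hasCompactSupport hψ.hasCompactSupport.mul_left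

variable [CompleteSpace E]

lemma gradient_eq_zero (hψ : IsC1TestFun U ψ) {x : E} (hx : x ∉ U) : gradient ψ x = 0 :=
  gradient_eq_zero_of_notMem_tsupport fun h => hx (hψ.tsupport_subset h)

lemma hasGradientAt (hψ : IsC1TestFun U ψ) (x : E) : HasGradientAt ψ (gradient ψ x) x :=
  (hψ.contDiff.differentiable one_ne_zero x).hasGradientAt

lemma continuous_gradient (hψ : IsC1TestFun U ψ) : Continuous (gradient ψ) :=
  continuousOn_univ.1 (continuousOn_gradient_of_isOpen isOpen_univ hψ.contDiff.contDiffOn)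

lemma tsupport_inner_gradient_subset (X : E → E) (ψ : E → ℝ) :
    tsupport (fun x => ⟪X x, gradient ψ x⟫) ⊆ tsupport ψ := by
  have hsupport : (Function.support fun x => ⟪X x, gradient ψ x⟫) ⊆
      Function.support (gradient ψ) := fun x hx hgrad => hx (by simp only [hgrad, inner_zero_right])
  exact (closure_mono hsupport).trans (tsupport_gradient_subset ψ)

lemma continuous_inner_gradient (hψ : IsC1TestFun U ψ) (hU : IsOpen U) {X : E → E}
    (hX : ContinuousOn X U) : Continuous fun x => ⟪X x, gradient ψ x⟫ :=
  continuous_of_tsupport fun _ hx =>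
    (hX.inner hψ.continuous_gradient.continuousOn).continuousAt
      (hU.mem_nhds (hψ.tsupport_subset (tsupport_inner_gradient_subset X ψ hx)))

variable [MeasurableSpace E] [BorelSpace E] {μ : Measure E} [IsFiniteMeasureOnCompacts μ]

lemma integrable_inner_gradient (hψ : IsC1TestFun U ψ) (hU : IsOpen U) {X : E → E}
    (hX : ContinuousOn X U) : Integrable (fun x => ⟪X x, gradient ψ x⟫) μ :=
  (hψ.continuous_inner_gradient hU hX).integrable_of_hasCompactSupport
    (hψ.hasCompactSupport.isCompact.of_isClosed_subset (isClosed_tsupport _)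
      (tsupport_inner_gradient_subset X ψ))

end IsC1TestFun

section Mollification

variable {E : Type*} [NormedAddCommGroup E] [InnerProductSpace ℝ E] [FiniteDimensional ℝ E]
  [MeasurableSpace E] [BorelSpace E] {μ : Measure E} [μ.IsAddHaarMeasure] {ψ : E → ℝ}

open scoped Convolution

lemma tsupport_normed_convolution_subset (β : ContDiffBump (0 : E)) (ψ : E → ℝ) :
    tsupport (β.normed μ ⋆[ContinuousLinearMap.lsmul ℝ ℝ, μ] ψ) ⊆
      cthickening β.rOut (tsupport ψ) := by
  refine closure_minimal (fun x hx => ?_) isClosed_cthickening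
  obtain ⟨y, hy, z, hz, rfl⟩ := support_convolution_subset_swap _ hx
  rw [β.support_normed_eq, mem_ball_zero_iff] at hz
  refine mem_cthickening_of_dist_le _ y _ _ (subset_tsupport _ hy) ?_
  rw [dist_eq_norm, add_sub_cancel_left]
  exact hz.le

lemma norm_fderiv_normed_convolution_sub_le (β : ContDiffBump (0 : E)) (hψ : ContDiff ℝ 1 ψ)
    (hc : HasCompactSupport ψ) {x : E} {ε : ℝ}
    (hε : ∀ y ∈ ball x β.rOut, ‖fderiv ℝ ψ y - fderiv ℝ ψ x‖ ≤ ε) :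
    ‖fderiv ℝ (β.normed μ ⋆[ContinuousLinearMap.lsmul ℝ ℝ, μ] ψ) x - fderiv ℝ ψ x‖ ≤ ε := by
  have hε0 : 0 ≤ ε := (norm_nonneg _).trans (hε x (mem_ball_self β.rOut_pos))
  have hβ : LocallyIntegrable (β.normed μ) μ := β.continuous_normed.locallyIntegrable
  have hψ' := hψ.continuous_fderiv one_ne_zero
  refine ContinuousLinearMap.opNorm_le_bound _ hε0 fun v => ?_
  rw [sub_apply, (hc.hasFDerivAt_convolution_right _ hβ hψ x).fderiv,
    convolution_precompR_apply _ hβ (hc.fderiv ℝ) hψ', ← dist_eq_norm]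
  refine β.dist_normed_convolution_le (g := fun a => fderiv ℝ ψ a v)
    (hψ'.clm_apply continuous_const).aestronglyMeasurable fun y hy => ?_
  rw [dist_eq_norm, ← sub_apply]
  exact ContinuousLinearMap.le_of_opNorm_le _ (hε y hy) v

lemma exists_contDiff_approx_of_hasCompactSupport (hψ : ContDiff ℝ 1 ψ)
    (hc : HasCompactSupport ψ) {δ ε : ℝ} (hδ : 0 < δ) (hε : 0 < ε) :
    ∃ φ : E → ℝ, ContDiff ℝ (⊤ : ℕ∞) φ ∧ HasCompactSupport φ ∧
      tsupport φ ⊆ cthickening δ (tsupport ψ) ∧ (∀ x, |φ x - ψ x| ≤ ε) ∧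
      ∀ x, ‖fderiv ℝ φ x - fderiv ℝ ψ x‖ ≤ ε := by
  let μ : Measure E := Measure.addHaar
  obtain ⟨r₁, hr₁, hval⟩ := Metric.uniformContinuous_iff.1
    (hc.uniformContinuous_of_continuous hψ.continuous) ε hε
  obtain ⟨r₂, hr₂, hderiv⟩ := Metric.uniformContinuous_iff.1
    ((hc.fderiv ℝ).uniformContinuous_of_continuous (hψ.continuous_fderiv one_ne_zero)) ε hε
  set r := min (min r₁ r₂) δ
  have hr : 0 < r := lt_min (lt_min hr₁ hr₂) hδ
  have hrr₁ : r ≤ r₁ := (min_le_left _ _).trans (min_le_left _ _)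
  have hrr₂ : r ≤ r₂ := (min_le_left _ _).trans (min_le_right _ _)
  let β : ContDiffBump (0 : E) := ⟨r / 2, r, by positivity, by linarith⟩
  refine ⟨β.normed μ ⋆[ContinuousLinearMap.lsmul ℝ ℝ, μ] ψ,
    β.hasCompactSupport_normed.contDiff_convolution_left _ β.contDiff_normed
      hψ.continuous.locallyIntegrable,
    β.hasCompactSupport_normed.convolution _ hc,
    (tsupport_normed_convolution_subset β ψ).trans (cthickening_mono (min_le_right _ _) _),
    fun x => ?_,
    fun x => norm_fderiv_normed_convolution_sub_le β hψ hc fun y hy => ?_⟩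
  · rw [← Real.dist_eq]
    exact β.dist_normed_convolution_le hψ.continuous.aestronglyMeasurable fun y hy =>
      (hval ((mem_ball.1 hy).trans_le hrr₁)).le
  · rw [← dist_eq_norm]
    exact (hderiv ((mem_ball.1 hy).trans_le hrr₂)).le

lemma IsC1TestFun.exists_contDiff_approx [CompleteSpace E] {U : Set E} (hψ : IsC1TestFun U ψ)
    (hU : IsOpen U) : ∃ K, IsCompact K ∧ K ⊆ U ∧ ∀ ε, 0 < ε → ∃ φ : E → ℝ,
      ContDiff ℝ (⊤ : ℕ∞) φ ∧ IsC1TestFun U φ ∧ tsupport (fun x => φ x - ψ x) ⊆ K ∧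
      (∀ x, |φ x - ψ x| ≤ ε) ∧ ∀ x, ‖gradient (fun y => φ y - ψ y) x‖ ≤ ε := by
  obtain ⟨δ, hδ, hδU⟩ := hψ.hasCompactSupport.isCompact.exists_cthickening_subset_open hU
    hψ.tsupport_subset
  refine ⟨cthickening δ (tsupport ψ), hψ.hasCompactSupport.isCompact.cthickening, hδU,
    fun ε hε => ?_⟩
  obtain ⟨φ, hφ, hφc, hφs, hval, hderiv⟩ :=
    exists_contDiff_approx_of_hasCompactSupport hψ.contDiff hψ.hasCompactSupport hδ hε
  have hφU : IsC1TestFun U φ := ⟨hφ.of_le (by norm_cast), hφc, hφs.trans hδU⟩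
  refine ⟨φ, hφ, hφU,
    (tsupport_sub φ ψ).trans (union_subset hφs (self_subset_cthickening _)), hval, fun x => ?_⟩
  rw [(hasGradientAt_sub (hφU.hasGradientAt x) (hψ.hasGradientAt x)).gradient, gradient, gradient,
    ← map_sub, LinearIsometryEquiv.norm_map]
  exact hderiv x

end Mollification

lemma integral_inner_gradient_add_mul_sub {E : Type*} [NormedAddCommGroup E]
    [InnerProductSpace ℝ E] [CompleteSpace E] [MeasurableSpace E] [BorelSpace E] {μ : Measure E}
    [IsFiniteMeasureOnCompacts μ] {U : Set E} (hU : IsOpen U) {X : E → E} {Y : E → ℝ}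
    (hX : ContinuousOn X U) (hY : ContinuousOn Y U) {φ ψ : E → ℝ} (hφ : IsC1TestFun U φ)
    (hψ : IsC1TestFun U ψ) :
    ∫ x, (⟪X x, gradient (fun y => φ y - ψ y) x⟫ + Y x * (φ x - ψ x)) ∂μ =
      (∫ x, (⟪X x, gradient φ x⟫ + Y x * φ x) ∂μ) -
        ∫ x, (⟪X x, gradient ψ x⟫ + Y x * ψ x) ∂μ := by
  rw [← integral_sub]
  · congr! 2 with x
    rw [(hasGradientAt_sub (hφ.hasGradientAt x) (hψ.hasGradientAt x)).gradient, inner_sub_right]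
    ring
  · exact (hφ.integrable_inner_gradient hU hX).add (hφ.integrable_mul hU hY)
  · exact (hψ.integrable_inner_gradient hU hX).add (hψ.integrable_mul hU hY)

/-- `div X = Y` weakly in `U`. Integrals run over the whole space since test functions vanish
outside `U`. -/
def HasWeakDivergence {E : Type*} [NormedAddCommGroup E] [InnerProductSpace ℝ E]
    [FiniteDimensional ℝ E] [CompleteSpace E] [MeasurableSpace E] [BorelSpace E] (U : Set E)
    (X : E → E) (Y : E → ℝ) : Prop :=
  ∀ ψ, IsC1TestFun U ψ → ∫ x, ⟪X x, gradient ψ x⟫ = -∫ x, Y x * ψ x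

namespace HasWeakDivergence

variable {E : Type*} [NormedAddCommGroup E] [InnerProductSpace ℝ E] [FiniteDimensional ℝ E]
  [CompleteSpace E] [MeasurableSpace E] [BorelSpace E] {U V : Set E} {X X' : E → E} {Y Y' : E → ℝ}

lemma mono (h : HasWeakDivergence V X Y) (hUV : U ⊆ V) : HasWeakDivergence U X Y :=
  fun ψ hψ => h ψ (hψ.mono hUV)

lemma congr (h : HasWeakDivergence U X Y) (hX : EqOn X X' U) (hY : EqOn Y Y' U) :
    HasWeakDivergence U X' Y' := by
  intro ψ hψ
  have hleft : ∀ x, ⟪X' x, gradient ψ x⟫ = ⟪X x, gradient ψ x⟫ := fun x => by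
    by_cases hx : x ∈ U
    · rw [hX hx]
    · rw [hψ.gradient_eq_zero hx, inner_zero_right, inner_zero_right]
  have hright : ∀ x, Y' x * ψ x = Y x * ψ x := fun x => by
    by_cases hx : x ∈ U
    · rw [hY hx]
    · rw [hψ.eq_zero hx, mul_zero, mul_zero]
  simp only [hleft, hright, h ψ hψ]

lemma const_smul (h : HasWeakDivergence U X Y) (c : ℝ) :
    HasWeakDivergence U (fun x => c • X x) fun x => c * Y x := by
  intro ψ hψ
  simp only [real_inner_smul_left, mul_assoc, integral_const_mul, h ψ hψ, mul_neg]

lemma comp_add_right (h : HasWeakDivergence U X Y) (a : E) :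
    HasWeakDivergence {x | x + a ∈ U} (fun x => X (x + a)) fun x => Y (x + a) := by
  intro ψ hψ
  have hψa : IsC1TestFun U fun x => ψ (x + -a) := by
    simpa using hψ.comp_add_right (-a)
  have htranslated := h _ hψa
  rw [← integral_add_right_eq_self _ a, ← integral_add_right_eq_self (fun x => Y x * _) a]
    at htranslated
  simpa [gradient_comp_add_right] using htranslated

lemma smul (h : HasWeakDivergence U X Y) (hU : IsOpen U) (hX : ContinuousOn X U)
    (hY : ContinuousOn Y U) {a : E → ℝ} (ha : ContDiffOn ℝ 1 a U) :
    HasWeakDivergence U (fun x => a x • X x) fun x => a x * Y x + ⟪X x, gradient a x⟫ := by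
  intro ψ hψ
  have haψ := hψ.mul_left hU ha
  have hleibniz : ∀ x, ⟪a x • X x, gradient ψ x⟫ =
      ⟪X x, gradient (fun y => a y * ψ y) x⟫ - ⟪X x, gradient a x⟫ * ψ x := fun x => by
    by_cases hx : x ∈ U
    · rw [(hasGradientAt_mul (hasGradientAt_of_contDiffOn hU ha hx) (hψ.hasGradientAt x)).gradient,
        inner_add_right, real_inner_smul_left, real_inner_smul_right, real_inner_smul_right]
      ring
    · simp [hψ.gradient_eq_zero hx, haψ.gradient_eq_zero hx, hψ.eq_zero hx]
  have hXa : Integrable fun x => ⟪X x, gradient a x⟫ * ψ x :=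
    hψ.integrable_mul hU (hX.inner (continuousOn_gradient_of_isOpen hU ha))
  have hYa : Integrable fun x => Y x * (a x * ψ x) := haψ.integrable_mul hU hY
  calc ∫ x, ⟪a x • X x, gradient ψ x⟫
      = -(∫ x, Y x * (a x * ψ x)) - ∫ x, ⟪X x, gradient a x⟫ * ψ x := by
        simp only [hleibniz]
        rw [integral_sub (haψ.integrable_inner_gradient hU hX) hXa, h _ haψ]
    _ = -∫ x, (a x * Y x + ⟪X x, gradient a x⟫) * ψ x := by
        rw [← neg_add', ← integral_add hYa hXa]
        congr! 3
        ring

lemma of_contDiff (hU : IsOpen U) (hX : ContinuousOn X U) (hY : ContinuousOn Y U)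
    (h : ∀ φ, ContDiff ℝ (⊤ : ℕ∞) φ → IsC1TestFun U φ →
      ∫ x, ⟪X x, gradient φ x⟫ = -∫ x, Y x * φ x) : HasWeakDivergence U X Y := by
  intro ψ hψ
  obtain ⟨K, hK, hKU, happrox⟩ := hψ.exists_contDiff_approx hU
  have hsplit : ∀ φ, IsC1TestFun U φ → ∫ x, (⟪X x, gradient φ x⟫ + Y x * φ x) =
      (∫ x, ⟪X x, gradient φ x⟫) + ∫ x, Y x * φ x := fun φ hφ =>
    integral_add (hφ.integrable_inner_gradient hU hX) (hφ.integrable_mul hU hY)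
  have hsmall : ∀ ε, 0 < ε →
      |∫ x, (⟪X x, gradient ψ x⟫ + Y x * ψ x)| ≤ ε * ∫ x in K, (‖X x‖ + |Y x|) := by
    intro ε hε
    obtain ⟨φ, hφ, hφU, hsupp, hval, hgrad⟩ := happrox ε hε
    have hφzero : ∫ x, (⟪X x, gradient φ x⟫ + Y x * φ x) = 0 := by
      rw [hsplit φ hφU, h φ hφ hφU, neg_add_cancel]
    have hbound := abs_integral_inner_gradient_add_mul_le (μ := volume) hK hsupp
      (hX.mono hKU) (hY.mono hKU) hval hgrad
    rwa [integral_inner_gradient_add_mul_sub hU hX hY hφU hψ, hφzero, zero_sub, abs_neg]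
      at hbound
  have hzero : |∫ x, (⟪X x, gradient ψ x⟫ + Y x * ψ x)| ≤ 0 := by
    have hlim : Tendsto (fun ε : ℝ => ε * ∫ x in K, (‖X x‖ + |Y x|)) (𝓝[>] 0) (𝓝 0) := by
      simpa using (tendsto_id.mono_left (nhdsWithin_le_nhds (a := (0 : ℝ)))).mul_const
        (∫ x in K, (‖X x‖ + |Y x|))
    exact ge_of_tendsto hlim (eventually_mem_nhdsWithin.mono hsmall)
  rw [abs_nonpos_iff, hsplit ψ hψ] at hzero
  exact eq_neg_of_add_eq_zero_left hzero

end HasWeakDivergence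

section IntegrationByParts

lemma IsC1TestFun.integrable_inner_mul_fderiv {E : Type*} [NormedAddCommGroup E]
    [InnerProductSpace ℝ E] [MeasurableSpace E] [BorelSpace E] {μ : Measure E}
    [IsFiniteMeasureOnCompacts μ] {U : Set E} {ψ : E → ℝ} (hψ : IsC1TestFun U ψ) (e v : E) :
    Integrable (fun x => ⟪e, x⟫ * fderiv ℝ ψ x v) μ := by
  have hcont : Continuous fun x => fderiv ℝ ψ x v :=
    (hψ.contDiff.continuous_fderiv one_ne_zero).clm_apply continuous_const
  exact (Continuous.mul (by fun_prop) hcont).integrable_of_hasCompactSupport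
    (hψ.hasCompactSupport.fderiv_apply ℝ v).mul_left

variable {E : Type*} [NormedAddCommGroup E] [InnerProductSpace ℝ E] [FiniteDimensional ℝ E]
  [MeasurableSpace E] [BorelSpace E] {μ : Measure E} [μ.IsAddHaarMeasure] {U : Set E} {ψ : E → ℝ}

lemma IsC1TestFun.integral_inner_mul_fderiv (hψ : IsC1TestFun U ψ) (e v : E) :
    ∫ x, ⟪e, x⟫ * fderiv ℝ ψ x v ∂μ = -(⟪e, v⟫ * ∫ x, ψ x ∂μ) := by
  have hderiv : ∀ x, HasFDerivAt (fun x => ⟪e, x⟫) (innerSL ℝ e) x := fun x =>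
    (innerSL ℝ e).hasFDerivAt
  have hψcont := hψ.contDiff.continuous
  rw [integral_mul_fderiv_eq_neg_fderiv_mul_of_integrable]
  · simp only [(hderiv _).fderiv, innerSL_apply_apply, integral_const_mul]
  · simp only [(hderiv _).fderiv, innerSL_apply_apply]
    exact (hψcont.integrable_of_hasCompactSupport hψ.hasCompactSupport).const_mul _
  · exact hψ.integrable_inner_mul_fderiv e v
  · exact (Continuous.mul (by fun_prop) hψcont).integrable_of_hasCompactSupport
      hψ.hasCompactSupport.mul_left
  · exact fun x _ => (hderiv x).differentiableAt
  · exact fun x _ => hψ.contDiff.differentiable one_ne_zero x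

lemma hasWeakDivergence_id [CompleteSpace E] (U : Set E) :
    HasWeakDivergence U (fun x => x) fun _ => Module.finrank ℝ E := by
  intro ψ hψ
  let b := stdOrthonormalBasis ℝ E
  have hsum : ∀ x, ⟪x, gradient ψ x⟫ = ∑ i, ⟪b i, x⟫ * fderiv ℝ ψ x (b i) := fun x => by
    rw [← b.sum_inner_mul_inner]
    simp only [inner_gradient_right, conj_trivial, real_inner_comm]
  simp only [hsum]
  rw [integral_finsetSum _ fun i _ => hψ.integrable_inner_mul_fderiv (b i) (b i)]
  simp [hψ.integral_inner_mul_fderiv, integral_const_mul]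

end IntegrationByParts

section Truncation

lemma hasDerivAt_max_zero_sq (t : ℝ) :
    HasDerivAt (fun t : ℝ => max t 0 ^ 2) (2 * max t 0) t := by
  rcases lt_trichotomy t 0 with h | rfl | h
  · rw [max_eq_right h.le, mul_zero]
    refine (hasDerivAt_const t (0 : ℝ)).congr_of_eventuallyEq ?_
    filter_upwards [gt_mem_nhds h] with y hy
    simp [max_eq_right hy.le]
  · rw [max_self, mul_zero, hasDerivAt_iff_isLittleO]
    refine Asymptotics.IsBigO.trans_isLittleO (g := fun y : ℝ => y ^ 2) ?_ ?_
    · refine Asymptotics.isBigO_of_le _ fun y => ?_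
      rcases le_total y 0 with hy | hy <;> simp [hy, sq_nonneg]
    · simpa using Asymptotics.isLittleO_pow_id (𝕜 := ℝ) one_lt_two
  · rw [max_eq_left h.le]
    have hsq : HasDerivAt (fun t : ℝ => t ^ 2) (2 * t) t := by simpa using hasDerivAt_pow 2 t
    refine hsq.congr_of_eventuallyEq ?_
    filter_upwards [lt_mem_nhds h] with y hy
    simp [max_eq_left hy.le]

lemma contDiff_max_zero_sq : ContDiff ℝ 1 fun t : ℝ => max t 0 ^ 2 := by
  refine contDiff_one_iff_deriv.2 ⟨fun t => (hasDerivAt_max_zero_sq t).differentiableAt, ?_⟩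
  rw [funext fun t => (hasDerivAt_max_zero_sq t).deriv]
  fun_prop

/-- The squared positive part `(g⁺)²` on `U`, extended by zero. Squaring makes it `C¹`, so that
no Sobolev test functions are needed. -/
def posPartSqOn {E : Type*} (U : Set E) (g : E → ℝ) : E → ℝ :=
  U.indicator fun x => max (g x) 0 ^ 2

lemma le_zero_of_posPartSqOn_eq_zero {E : Type*} {U : Set E} {g : E → ℝ} {x : E} (hx : x ∈ U)
    (h : posPartSqOn U g x = 0) : g x ≤ 0 := by
  rwa [posPartSqOn, indicator_of_mem hx, sq_eq_zero_iff, max_eq_right_iff] at h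

variable {E : Type*} [NormedAddCommGroup E] {U : Set E} {g : E → ℝ} {x : E}

lemma posPartSqOn_eventuallyEq (hU : IsOpen U) (hx : x ∈ U) :
    posPartSqOn U g =ᶠ[𝓝 x] fun x => max (g x) 0 ^ 2 :=
  (hU.eventually_mem hx).mono fun _ hy => indicator_of_mem hy _

lemma isC1TestFun_posPartSqOn [NormedSpace ℝ E] (hU : IsOpen U) (hg : ContDiffOn ℝ 1 g U)
    {K : Set E} (hK : IsCompact K) (hKU : K ⊆ U) (hpos : ∀ x ∈ U, 0 < g x → x ∈ K) :
    IsC1TestFun U (posPartSqOn U g) := by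
  have htsupport : tsupport (posPartSqOn U g) ⊆ K := by
    refine closure_minimal (fun x hx => ?_) hK.isClosed
    have hxU : x ∈ U := by_contra fun h => hx (indicator_of_notMem h _)
    refine hpos x hxU (not_le.1 fun hgx => hx ?_)
    rw [posPartSqOn, indicator_of_mem hxU, max_eq_right hgx, zero_pow two_ne_zero]
  refine ⟨contDiff_of_forall_mem_tsupport fun x hx => ?_,
    hK.of_isClosed_subset (isClosed_tsupport _) htsupport, htsupport.trans hKU⟩
  have hxU := hKU (htsupport hx)
  exact (contDiff_max_zero_sq.contDiffAt.comp x
    (hg.contDiffAt (hU.mem_nhds hxU))).congr_of_eventuallyEq (posPartSqOn_eventuallyEq hU hxU)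

lemma gradient_posPartSqOn [InnerProductSpace ℝ E] [CompleteSpace E] {g' : E} (hU : IsOpen U)
    (hx : x ∈ U) (hg : HasGradientAt g g' x) :
    gradient (posPartSqOn U g) x = (2 * max (g x) 0) • g' := by
  rw [(posPartSqOn_eventuallyEq hU hx).gradient_eq,
    (hasGradientAt_comp (hasDerivAt_max_zero_sq (g x)) hg).gradient]

lemma isCompact_superlevel_of_neg_frontier {X : Type*} [TopologicalSpace X] {U : Set X}
    {g : X → ℝ} (hU : IsOpen U) (hg : ContinuousOn g (closure U))
    (hfr : ∀ x ∈ frontier U, g x < 0) (hinf : ∀ᶠ x in cocompact X ⊓ 𝓟 U, g x < 0) :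
    IsCompact {x ∈ closure U | 0 ≤ g x} ∧ {x ∈ closure U | 0 ≤ g x} ⊆ U := by
  have hsubset : {x ∈ closure U | 0 ≤ g x} ⊆ U := fun x hx => by_contra fun hxU =>
    (hfr x ⟨hx.1, by rwa [hU.interior_eq]⟩).not_ge hx.2
  refine ⟨?_, hsubset⟩
  obtain ⟨T, hT, hTg⟩ := mem_cocompact.1 (eventually_inf_principal.1 hinf)
  exact hT.of_isClosed_subset (hg.preimage_isClosed_of_isClosed isClosed_closure isClosed_Ici)
    fun x hx => by_contra fun hxT => (hTg hxT (hsubset hx)).not_ge hx.2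

end Truncation

section Comparison

variable {E : Type*} [NormedAddCommGroup E] [InnerProductSpace ℝ E] [CompleteSpace E] {U : Set E}
  {ψ : E → ℝ} {A : E → E} {w₁ w₂ : E → ℝ}

lemma IsC1TestFun.eq_zero_of_gradient_eq_zero [Nontrivial E] (hψ : IsC1TestFun U ψ)
    (hgrad : ∀ x, gradient ψ x = 0) (x : E) : ψ x = 0 := by
  obtain ⟨y, hy⟩ := (ne_univ_iff_exists_notMem _).1 hψ.hasCompactSupport.ne_univ
  rw [← image_eq_zero_of_notMem_tsupport hy]
  exact is_const_of_fderiv_eq_zero (hψ.contDiff.differentiable one_ne_zero)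
    (fun z => (InnerProductSpace.toDual ℝ E).symm.map_eq_zero_iff.1 (hgrad z)) x y

lemma gradient_posPartSqOn_sub (hU : IsOpen U) (hw₁ : ContDiffOn ℝ 1 w₁ U)
    (hw₂ : ContDiffOn ℝ 1 w₂ U) {x : E} (hx : x ∈ U) :
    gradient (posPartSqOn U fun y => w₁ y - w₂ y) x =
      (2 * max (w₁ x - w₂ x) 0) • (gradient w₁ x - gradient w₂ x) :=
  gradient_posPartSqOn hU hx (hasGradientAt_sub (hasGradientAt_of_contDiffOn hU hw₁ hx)
    (hasGradientAt_of_contDiffOn hU hw₂ hx))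

lemma inner_gradient_posPartSqOn_sub_nonneg (hU : IsOpen U)
    (hmono : ∀ ξ η, ξ ≠ η → 0 < ⟪A ξ - A η, ξ - η⟫) (hw₁ : ContDiffOn ℝ 1 w₁ U)
    (hw₂ : ContDiffOn ℝ 1 w₂ U) {x : E} (hx : x ∈ U) :
    0 ≤ ⟪A (gradient w₁ x) - A (gradient w₂ x),
      gradient (posPartSqOn U fun y => w₁ y - w₂ y) x⟫ := by
  rw [gradient_posPartSqOn_sub hU hw₁ hw₂ hx, real_inner_smul_right]
  refine mul_nonneg (by positivity) ?_
  rcases eq_or_ne (gradient w₁ x) (gradient w₂ x) with h | h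
  · simp [h]
  · exact (hmono _ _ h).le

variable [FiniteDimensional ℝ E] [MeasurableSpace E] [BorelSpace E]

lemma gradient_posPartSqOn_sub_eq_zero (hU : IsOpen U) (hA : Continuous A)
    (hmono : ∀ ξ η, ξ ≠ η → 0 < ⟪A ξ - A η, ξ - η⟫) (hw₁ : ContDiffOn ℝ 1 w₁ U)
    (hw₂ : ContDiffOn ℝ 1 w₂ U) (hdiv₁ : HasWeakDivergence U (fun x => A (gradient w₁ x)) 0)
    (hdiv₂ : HasWeakDivergence U (fun x => A (gradient w₂ x)) 0)
    (hψ : IsC1TestFun U (posPartSqOn U fun x => w₁ x - w₂ x)) (x : E) :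
    gradient (posPartSqOn U fun x => w₁ x - w₂ x) x = 0 := by
  set ψ := posPartSqOn U fun x => w₁ x - w₂ x with hψdef
  have hX₁ : ContinuousOn (fun x => A (gradient w₁ x)) U :=
    hA.comp_continuousOn (continuousOn_gradient_of_isOpen hU hw₁)
  have hX₂ : ContinuousOn (fun x => A (gradient w₂ x)) U :=
    hA.comp_continuousOn (continuousOn_gradient_of_isOpen hU hw₂)
  have hnonneg : ∀ x, 0 ≤ ⟪A (gradient w₁ x) - A (gradient w₂ x), gradient ψ x⟫ := fun x => by
    by_cases hx : x ∈ U
    · exact inner_gradient_posPartSqOn_sub_nonneg hU hmono hw₁ hw₂ hx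
    · rw [hψ.gradient_eq_zero hx, inner_zero_right]
  have hintegral : ∫ x, ⟪A (gradient w₁ x) - A (gradient w₂ x), gradient ψ x⟫ = 0 := by
    simp only [inner_sub_left]
    rw [integral_sub (hψ.integrable_inner_gradient hU hX₁) (hψ.integrable_inner_gradient hU hX₂),
      hdiv₁ ψ hψ, hdiv₂ ψ hψ, sub_self]
  have hzero : ⟪A (gradient w₁ x) - A (gradient w₂ x), gradient ψ x⟫ = 0 := congrFun
    (((hψ.continuous_inner_gradient hU (hX₁.sub hX₂)).ae_eq_iff_eq volume continuous_zero).1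
      ((integral_eq_zero_iff_of_nonneg hnonneg
        (hψ.integrable_inner_gradient hU (hX₁.sub hX₂))).1 hintegral)) x
  by_cases hx : x ∈ U
  · have hgrad := gradient_posPartSqOn_sub hU hw₁ hw₂ hx
    rw [← hψdef] at hgrad
    rw [hgrad, real_inner_smul_right, mul_eq_zero] at hzero
    rw [hgrad, smul_eq_zero, sub_eq_zero]
    exact hzero.imp_right fun h => by_contra fun hne => (hmono _ _ hne).ne' h
  · exact hψ.gradient_eq_zero hx

lemma le_of_lt_frontier_of_hasWeakDivergence [Nontrivial E] (hU : IsOpen U) (hA : Continuous A)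
    (hmono : ∀ ξ η, ξ ≠ η → 0 < ⟪A ξ - A η, ξ - η⟫) (hw₁ : ContDiffOn ℝ 1 w₁ U)
    (hw₂ : ContDiffOn ℝ 1 w₂ U) (hdiv₁ : HasWeakDivergence U (fun x => A (gradient w₁ x)) 0)
    (hdiv₂ : HasWeakDivergence U (fun x => A (gradient w₂ x)) 0)
    (hcont₁ : ContinuousOn w₁ (closure U)) (hcont₂ : ContinuousOn w₂ (closure U))
    (hfr : ∀ x ∈ frontier U, w₁ x < w₂ x) (hinf : ∀ᶠ x in cocompact E ⊓ 𝓟 U, w₁ x < w₂ x)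
    {x : E} (hx : x ∈ U) : w₁ x ≤ w₂ x := by
  obtain ⟨hK, hKU⟩ := isCompact_superlevel_of_neg_frontier hU (hcont₁.sub hcont₂)
    (fun y hy => sub_neg.2 (hfr y hy)) (hinf.mono fun y hy => sub_neg.2 hy)
  have hψ : IsC1TestFun U (posPartSqOn U fun x => w₁ x - w₂ x) :=
    isC1TestFun_posPartSqOn hU (hw₁.sub hw₂) hK hKU fun y hy hpos =>
      ⟨subset_closure hy, hpos.le⟩
  exact sub_nonpos.1 <| le_zero_of_posPartSqOn_eq_zero (g := fun y => w₁ y - w₂ y) hx <|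
    hψ.eq_zero_of_gradient_eq_zero
      (gradient_posPartSqOn_sub_eq_zero hU hA hmono hw₁ hw₂ hdiv₁ hdiv₂ hψ) x

theorem le_of_le_frontier_of_hasWeakDivergence [Nontrivial E] (hU : IsOpen U) (hA : Continuous A)
    (hmono : ∀ ξ η, ξ ≠ η → 0 < ⟪A ξ - A η, ξ - η⟫) (hw₁ : ContDiffOn ℝ 1 w₁ U)
    (hw₂ : ContDiffOn ℝ 1 w₂ U) (hdiv₁ : HasWeakDivergence U (fun x => A (gradient w₁ x)) 0)
    (hdiv₂ : HasWeakDivergence U (fun x => A (gradient w₂ x)) 0)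
    (hcont₁ : ContinuousOn w₁ (closure U)) (hcont₂ : ContinuousOn w₂ (closure U))
    (hfr : ∀ x ∈ frontier U, w₁ x ≤ w₂ x)
    (hinf : ∀ ε, 0 < ε → ∀ᶠ x in cocompact E ⊓ 𝓟 U, w₁ x ≤ w₂ x + ε)
    {x : E} (hx : x ∈ closure U) : w₁ x ≤ w₂ x := by
  rw [closure_eq_self_union_frontier] at hx
  rcases hx with hxU | hxfr
  swap
  · exact hfr x hxfr
  refine le_of_forall_pos_le_add fun ε hε => ?_
  have hgrad : ∀ y, gradient (fun z => w₂ z + ε) y = gradient w₂ y := fun y => by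
    rw [gradient, gradient, fderiv_add_const]
  refine le_of_lt_frontier_of_hasWeakDivergence hU hA hmono hw₁ (hw₂.add contDiffOn_const) hdiv₁
    (by simpa only [hgrad] using hdiv₂) hcont₁ (hcont₂.add continuousOn_const) (fun y hy => ?_)
    ?_ hxU
  · linarith [hfr y hy]
  · filter_upwards [hinf (ε / 2) (half_pos hε)] with y hy
    linarith

end Comparison

namespace MinkowskiNorm

variable {n : ℕ} (N : MinkowskiNorm n)

lemma F_zero : N.F 0 = 0 := by simpa using N.homog 0 le_rfl 0

lemma F_nonneg (ξ : En n) : 0 ≤ N.F ξ := by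
  rcases eq_or_ne ξ 0 with rfl | hξ
  · exact N.F_zero.ge
  · exact (N.pos ξ hξ).le

lemma ne_zero_of_F_pos {ξ : En n} (h : 0 < N.F ξ) : ξ ≠ 0 := by
  rintro rfl
  exact h.ne' N.F_zero

lemma F_add_le (ξ η : En n) : N.F (ξ + η) ≤ N.F ξ + N.F η := by
  have hmid := N.convexOn.2 (mem_univ ((2 : ℝ) • ξ)) (mem_univ ((2 : ℝ) • η))
    (by norm_num : (0 : ℝ) ≤ 1 / 2) (by norm_num : (0 : ℝ) ≤ 1 / 2) (by norm_num)
  simpa [smul_smul, N.homog 2 zero_le_two] using hmid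

lemma continuous_F : Continuous N.F :=
  continuousOn_univ.1 (N.convexOn.continuousOn isOpen_univ)

lemma contDiffAt_F {ξ : En n} (hξ : ξ ≠ 0) : ContDiffAt ℝ (⊤ : ℕ∞) N.F ξ :=
  N.smooth.contDiffAt (isOpen_compl_singleton.mem_nhds hξ)

lemma differentiableAt_F {ξ : En n} (hξ : ξ ≠ 0) : DifferentiableAt ℝ N.F ξ :=
  (N.contDiffAt_F hξ).differentiableAt (by simp)

lemma continuousAt_gradient_F {ξ : En n} (hξ : ξ ≠ 0) : ContinuousAt (gradient N.F) ξ :=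
  (InnerProductSpace.toDual ℝ (En n)).symm.continuous.continuousAt.comp
    ((N.contDiffAt_F hξ).fderiv_right (m := 0) (by norm_cast)).continuousAt

lemma inner_gradient_le {ξ : En n} (hξ : ξ ≠ 0) (η : En n) :
    ⟪gradient N.F ξ, η⟫ ≤ N.F η := by
  rw [inner_gradient_left]
  refine apply_le_of_mem_posTangentConeAt
    (N.differentiableAt_F hξ).hasFDerivAt.hasFDerivWithinAt N.continuous_F N.homog
    (fun y _ => ?_) (by rw [posTangentConeAt_univ]; trivial)
  have := N.F_add_le ξ (y - ξ)
  rw [add_sub_cancel] at this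
  linarith

lemma inner_gradient_self {ξ : En n} (hξ : ξ ≠ 0) : ⟪gradient N.F ξ, ξ⟫ = N.F ξ := by
  rw [inner_gradient_left, fderiv_apply_self_of_homogeneous N.homog (N.differentiableAt_F hξ)]

lemma gradient_smul {c : ℝ} (hc : 0 < c) (ξ : En n) :
    gradient N.F (c • ξ) = gradient N.F ξ := by
  rw [gradient, gradient, fderiv_smul_of_homogeneous N.homog hc]

lemma gradient_neg (ξ : En n) : gradient N.F (-ξ) = -gradient N.F ξ := by
  have h := fderiv_comp_smul (𝕜 := ℝ) (f := N.F) (x := ξ) (-1)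
  simp only [neg_smul, one_smul, N.even] at h
  rw [gradient, gradient, h, map_neg, neg_neg]

lemma F_add_smul_sub_eq {ξ η : En n} (hξ : ξ ≠ 0) (hF : N.F ξ = N.F η)
    (h : ⟪gradient N.F ξ, η⟫ = N.F η) {t : ℝ} (ht : t ∈ Icc (0 : ℝ) 1) :
    N.F (ξ + t • (η - ξ)) = N.F ξ := by
  apply le_antisymm
  · have hcomb : ξ + t • (η - ξ) = (1 - t) • ξ + t • η := by module
    have hle := N.F_add_le ((1 - t) • ξ) (t • η)
    rw [N.homog _ (sub_nonneg.2 ht.2), N.homog _ ht.1, ← hF] at hle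
    rw [hcomb]
    linarith
  · have hle := N.inner_gradient_le hξ (ξ + t • (η - ξ))
    rw [inner_add_right, real_inner_smul_right, inner_sub_right, h,
      N.inner_gradient_self hξ, hF] at hle
    linarith

-- Otherwise `F` is constant on `[ξ, η]`, so the Hessian of `F² / 2` degenerates at the midpoint.
lemma eq_of_inner_gradient_eq {ξ η : En n} (hξ : ξ ≠ 0) (hF : N.F ξ = N.F η)
    (h : ⟪gradient N.F ξ, η⟫ = N.F η) : ξ = η := by
  by_contra hne
  set v := η - ξ
  set m := ξ + (1 / 2 : ℝ) • v with hm
  have hconst : ∀ t ∈ Icc (0 : ℝ) 1, N.F (ξ + t • v) = N.F ξ := fun t ht =>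
    N.F_add_smul_sub_eq hξ hF h ht
  have hm0 : m ≠ 0 := N.ne_zero_of_F_pos <| by
    rw [hm, hconst _ (by norm_num)]
    exact N.pos ξ hξ
  refine (N.elliptic m hm0 v (sub_ne_zero.2 (Ne.symm hne))).ne' ?_
  refine fderiv_fderiv_apply_eq_zero_of_eventually_const (c := N.F ξ ^ 2 / 2)
    (((N.contDiffAt_F hm0).of_le (by norm_cast)).pow 2 |>.div_const 2) ?_
  filter_upwards [Icc_mem_nhds (by norm_num : (-(1 / 2) : ℝ) < 0) (by norm_num : (0 : ℝ) < 1 / 2)]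
    with t ht
  have hline : m + t • v = ξ + (1 / 2 + t) • v := by rw [hm]; module
  rw [hline, hconst _ ⟨by linarith [ht.1], by linarith [ht.2]⟩]

lemma polarF_le {x : En n} {M : ℝ} (hM : 0 ≤ M) (h : ∀ ξ : En n, ⟪ξ, x⟫ ≤ N.F ξ * M) :
    polarF N x ≤ M := by
  refine Real.sSup_le ?_ hM
  rintro _ ⟨ξ, hξ, rfl⟩
  rw [div_le_iff₀ (N.pos ξ hξ), mul_comm]
  exact h ξ

lemma inner_le_mul_polarF (ξ x : En n) : ⟪ξ, x⟫ ≤ N.F ξ * polarF N x := by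
  rcases eq_or_ne ξ 0 with rfl | hξ
  · simp [N.F_zero]
  obtain ⟨c, hc, hF⟩ := exists_pos_mul_norm_le_of_homogeneous N.homog N.continuous_F N.pos
  rw [← div_le_iff₀' (N.pos ξ hξ)]
  refine le_csSup ⟨c⁻¹ * ‖x‖, ?_⟩ ⟨ξ, hξ, rfl⟩
  rintro _ ⟨η, hη, rfl⟩
  rw [div_le_iff₀' (N.pos η hη)]
  calc ⟪η, x⟫ ≤ ‖η‖ * ‖x‖ := real_inner_le_norm η x
    _ = c * ‖η‖ * (c⁻¹ * ‖x‖) := by field_simp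
    _ ≤ N.F η * (c⁻¹ * ‖x‖) := by gcongr; exact hF η

lemma polarF_pos {x : En n} (hx : x ≠ 0) : 0 < polarF N x := by
  have h := N.inner_le_mul_polarF x x
  rw [real_inner_self_eq_norm_sq] at h
  exact pos_of_mul_pos_right ((pow_pos (norm_pos_iff.2 hx) 2).trans_le h) (N.F_nonneg x)

lemma polarF_zero : polarF N (0 : En n) = 0 := by
  refine le_antisymm (N.polarF_le le_rfl (by simp)) (Real.sSup_nonneg ?_)
  rintro _ ⟨ξ, -, rfl⟩
  simp

lemma polarF_nonneg (x : En n) : 0 ≤ polarF N x := by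
  rcases eq_or_ne x 0 with rfl | hx
  · exact N.polarF_zero.ge
  · exact (N.polarF_pos hx).le

lemma polarF_add_le (x y : En n) : polarF N (x + y) ≤ polarF N x + polarF N y := by
  refine N.polarF_le (add_nonneg (N.polarF_nonneg x) (N.polarF_nonneg y)) fun ξ => ?_
  rw [inner_add_right, mul_add]
  exact add_le_add (N.inner_le_mul_polarF ξ x) (N.inner_le_mul_polarF ξ y)

lemma polarF_smul (c : ℝ) (hc : 0 ≤ c) (x : En n) : polarF N (c • x) = c * polarF N x := by
  have hle : ∀ c : ℝ, 0 ≤ c → ∀ y, polarF N (c • y) ≤ c * polarF N y := fun c hc y => by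
    refine N.polarF_le (mul_nonneg hc (N.polarF_nonneg y)) fun ξ => ?_
    rw [real_inner_smul_right, mul_left_comm]
    exact mul_le_mul_of_nonneg_left (N.inner_le_mul_polarF ξ y) hc
  rcases hc.eq_or_lt with rfl | hc
  · simp [N.polarF_zero]
  · refine (hle c hc.le x).antisymm ?_
    have hinv := hle c⁻¹ (inv_pos.2 hc).le (c • x)
    rwa [inv_smul_smul₀ hc.ne', le_inv_mul_iff₀ hc] at hinv

lemma convexOn_polarF : ConvexOn ℝ univ (polarF N) := by
  refine ⟨convex_univ, fun x _ y _ a b ha hb _ => ?_⟩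
  rw [smul_eq_mul, smul_eq_mul, ← N.polarF_smul a ha, ← N.polarF_smul b hb]
  exact N.polarF_add_le _ _

lemma continuous_polarF : Continuous (polarF N) :=
  continuousOn_univ.1 (N.convexOn_polarF.continuousOn isOpen_univ)

lemma exists_pos_mul_norm_le_polarF : ∃ c, 0 < c ∧ ∀ x : En n, c * ‖x‖ ≤ polarF N x :=
  exists_pos_mul_norm_le_of_homogeneous N.polarF_smul N.continuous_polarF fun _ => N.polarF_pos

lemma tendsto_polarF_cocompact : Tendsto (polarF N) (cocompact (En n)) atTop := by
  obtain ⟨c, hc, hle⟩ := N.exists_pos_mul_norm_le_polarF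
  exact tendsto_atTop_mono hle (tendsto_norm_cocompact_atTop.const_mul_atTop hc)

lemma isCompact_F_eq_one : IsCompact {ξ : En n | N.F ξ = 1} := by
  obtain ⟨c, hc, hF⟩ := exists_pos_mul_norm_le_of_homogeneous N.homog N.continuous_F N.pos
  refine isCompact_of_isClosed_isBounded (isClosed_eq N.continuous_F continuous_const) ?_
  refine isBounded_iff_forall_norm_le.2 ⟨c⁻¹, fun ξ (hξ : N.F ξ = 1) => ?_⟩
  rw [← one_div, le_div_iff₀' hc, ← hξ]
  exact hF ξ

lemma F_inv_smul_self {ξ : En n} (hξ : ξ ≠ 0) : N.F ((N.F ξ)⁻¹ • ξ) = 1 := by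
  rw [N.homog _ (inv_nonneg.2 (N.F_nonneg ξ)), inv_mul_cancel₀ (N.pos ξ hξ).ne']

lemma exists_inner_eq_polarF {x : En n} (hx : x ≠ 0) :
    ∃ ξ : En n, N.F ξ = 1 ∧ ⟪ξ, x⟫ = polarF N x := by
  obtain ⟨ξ, hξ, hmax⟩ := N.isCompact_F_eq_one.exists_isMaxOn
    (f := fun ξ => ⟪ξ, x⟫) ⟨_, N.F_inv_smul_self hx⟩ (by fun_prop)
  have hle : ∀ η : En n, ⟪η, x⟫ ≤ N.F η * ⟪ξ, x⟫ := fun η => by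
    rcases eq_or_ne η 0 with rfl | hη
    · simp [N.F_zero]
    · rw [← inv_mul_le_iff₀ (N.pos η hη), ← real_inner_smul_left]
      exact hmax (N.F_inv_smul_self hη)
  refine ⟨ξ, hξ, le_antisymm ?_ (N.polarF_le ?_ hle)⟩
  · simpa [show N.F ξ = 1 from hξ] using N.inner_le_mul_polarF ξ x
  · exact nonneg_of_mul_nonneg_right (real_inner_self_nonneg.trans (hle x)) (N.pos x hx)

lemma polarF_smul_gradient_eq {x ξ : En n} (hξ : N.F ξ = 1) (h : ⟪ξ, x⟫ = polarF N x) :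
    polarF N x • gradient N.F ξ = x := by
  have hξ0 : ξ ≠ 0 := N.ne_zero_of_F_pos (hξ ▸ one_pos)
  have hmin : IsLocalMin (fun η : En n => polarF N x * N.F η - ⟪x, η⟫) ξ := by
    refine Eventually.of_forall fun η => ?_
    have hη := N.inner_le_mul_polarF η x
    simp only [hξ, real_inner_comm _ x, h]
    linarith
  have hderiv := hmin.hasFDerivAt_eq_zero
    (((N.differentiableAt_F hξ0).hasFDerivAt.const_mul (polarF N x)).sub (innerSL ℝ x).hasFDerivAt)
  refine ext_inner_right ℝ fun v => ?_
  have hv := DFunLike.congr_fun hderiv v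
  simp only [sub_apply, smul_apply, smul_eq_mul, innerSL_apply_apply, zero_apply] at hv
  rw [real_inner_smul_left, inner_gradient_left]
  linarith

lemma eq_of_inner_eq_polarF {x ξ η : En n} (hx : x ≠ 0) (hξ : N.F ξ = 1)
    (hξx : ⟪ξ, x⟫ = polarF N x) (hη : N.F η = 1) (hηx : ⟪η, x⟫ = polarF N x) : ξ = η := by
  refine N.eq_of_inner_gradient_eq (N.ne_zero_of_F_pos (hξ ▸ one_pos)) (hξ.trans hη.symm) ?_
  refine mul_left_cancel₀ (N.polarF_pos hx).ne' ?_
  rw [← real_inner_smul_left, N.polarF_smul_gradient_eq hξ hξx, real_inner_comm, hηx, hη, mul_one]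

/-- The point of `{F = 1}` at which the supremum defining `F^o(x)` is attained, with value `0` at
`x = 0`. It is the gradient of `F^o` at `x ≠ 0`. -/
def polarDual (x : En n) : En n :=
  open Classical in if hx : x ≠ 0 then (N.exists_inner_eq_polarF hx).choose else 0

lemma F_polarDual {x : En n} (hx : x ≠ 0) : N.F (N.polarDual x) = 1 := by
  rw [polarDual, dif_pos hx]
  exact (N.exists_inner_eq_polarF hx).choose_spec.1

lemma inner_polarDual {x : En n} (hx : x ≠ 0) : ⟪N.polarDual x, x⟫ = polarF N x := by
  rw [polarDual, dif_pos hx]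
  exact (N.exists_inner_eq_polarF hx).choose_spec.2

lemma inner_polarDual_le {x : En n} (hx : x ≠ 0) (y : En n) :
    ⟪N.polarDual x, y⟫ ≤ polarF N y := by
  simpa [N.F_polarDual hx] using N.inner_le_mul_polarF (N.polarDual x) y

lemma gradient_F_polarDual {x : En n} (hx : x ≠ 0) :
    gradient N.F (N.polarDual x) = (polarF N x)⁻¹ • x := by
  rw [eq_inv_smul_iff₀ (N.polarF_pos hx).ne',
    N.polarF_smul_gradient_eq (N.F_polarDual hx) (N.inner_polarDual hx)]

lemma continuousAt_polarDual {x : En n} (hx : x ≠ 0) : ContinuousAt N.polarDual x := by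
  have hev : ∀ᶠ y in 𝓝 x, y ≠ 0 := isOpen_ne.mem_nhds hx
  refine N.isCompact_F_eq_one.tendsto_nhds_of_unique_mapClusterPt
    (hev.mono fun y hy => N.F_polarDual hy) fun ξ hξ hcl => ?_
  obtain ⟨U, hU, hUξ⟩ := mapClusterPt_iff_ultrafilter.1 hcl
  refine N.eq_of_inner_eq_polarF hx hξ ?_ (N.F_polarDual hx) (N.inner_polarDual hx)
  have hinner : Tendsto (fun y => ⟪N.polarDual y, y⟫) U (𝓝 ⟪ξ, x⟫) :=
    hUξ.inner (tendsto_id.mono_left hU)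
  refine tendsto_nhds_unique (hinner.congr' ?_) (N.continuous_polarF.continuousAt.mono_left hU)
  exact (hev.filter_mono hU).mono fun y hy => N.inner_polarDual hy

lemma hasGradientAt_polarF {x : En n} (hx : x ≠ 0) :
    HasGradientAt (polarF N) (N.polarDual x) x := by
  rw [hasGradientAt_iff_isLittleO]
  refine Asymptotics.isLittleO_iff.2 fun c hc => ?_
  filter_upwards [isOpen_ne.mem_nhds hx,
    Metric.tendsto_nhds.1 (N.continuousAt_polarDual hx) c hc] with y hy hyc
  have hlower : ⟪N.polarDual x, y - x⟫ ≤ polarF N y - polarF N x := by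
    rw [inner_sub_right, N.inner_polarDual hx]
    linarith [N.inner_polarDual_le hx y]
  have hupper : polarF N y - polarF N x ≤ ⟪N.polarDual y, y - x⟫ := by
    rw [inner_sub_right, N.inner_polarDual hy]
    linarith [N.inner_polarDual_le hy x]
  have hgap : ⟪N.polarDual y - N.polarDual x, y - x⟫ ≤ c * ‖y - x‖ := by
    refine (real_inner_le_norm _ _).trans ?_
    rw [← dist_eq_norm (N.polarDual y)]
    gcongr
  rw [inner_sub_left] at hgap
  rw [Real.norm_eq_abs, abs_of_nonneg (by linarith)]
  linarith

lemma contDiffOn_polarF : ContDiffOn ℝ 1 (polarF N) {(0 : En n)}ᶜ := by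
  have hone := contDiffOn_succ_iff_fderiv_of_isOpen (𝕜 := ℝ) (n := 0) (f := polarF N)
    (isOpen_compl_singleton (x := (0 : En n)))
  rw [zero_add] at hone
  refine hone.2 ⟨fun x hx => (N.hasGradientAt_polarF hx).differentiableAt.differentiableWithinAt,
    by simp, contDiffOn_zero.2 ?_⟩
  refine ContinuousOn.congr (f := fun y => InnerProductSpace.toDual ℝ (En n) (N.polarDual y))
    (fun x hx => ?_) fun y hy => (N.hasGradientAt_polarF hy).hasFDerivAt.fderiv
  exact ((InnerProductSpace.toDual ℝ (En n)).continuous.continuousAt.comp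
    (N.continuousAt_polarDual hx)).continuousWithinAt

lemma F_le_of_inner_le {g : En n} {L : ℝ} (hL : 0 ≤ L) (h : ∀ d, ⟪g, d⟫ ≤ L * polarF N d) :
    N.F g ≤ L := by
  rcases eq_or_ne g 0 with rfl | hg
  · rwa [N.F_zero]
  have hpolar : polarF N (gradient N.F g) ≤ 1 := N.polarF_le zero_le_one fun ξ => by
    rw [real_inner_comm, mul_one]
    exact N.inner_gradient_le hg ξ
  calc N.F g = ⟪g, gradient N.F g⟫ := by rw [real_inner_comm, N.inner_gradient_self hg]
    _ ≤ L * polarF N (gradient N.F g) := h _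
    _ ≤ L := mul_le_of_le_one_right hL hpolar

/-- The flux `F(ξ)^{p-1} F_ξ(ξ)` of the Finsler `p`-Laplacian. -/
def flux (p : ℝ) (ξ : En n) : En n := N.F ξ ^ (p - 1) • gradient N.F ξ

variable {p : ℝ}

lemma flux_zero (hp : 1 < p) : N.flux p 0 = 0 := by
  simp [flux, N.F_zero, Real.zero_rpow (sub_pos.2 hp).ne']

lemma flux_neg (ξ : En n) : N.flux p (-ξ) = -N.flux p ξ := by
  simp [flux, N.even, N.gradient_neg]

lemma flux_smul {c : ℝ} (hc : 0 < c) (ξ : En n) :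
    N.flux p (c • ξ) = c ^ (p - 1) • N.flux p ξ := by
  rw [flux, flux, N.gradient_smul hc, N.homog c hc.le, Real.mul_rpow hc.le (N.F_nonneg ξ),
    smul_smul]

lemma inner_flux_self (hp : 1 < p) (ξ : En n) : ⟪N.flux p ξ, ξ⟫ = N.F ξ ^ p := by
  rcases eq_or_ne ξ 0 with rfl | hξ
  · simp [N.F_zero, Real.zero_rpow (by linarith : p ≠ 0)]
  · rw [flux, real_inner_smul_left, N.inner_gradient_self hξ,
      ← Real.rpow_add_one (N.pos ξ hξ).ne', sub_add_cancel]

lemma inner_flux_le (hp : 1 < p) (ξ η : En n) :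
    ⟪N.flux p ξ, η⟫ ≤ N.F ξ ^ (p - 1) * N.F η := by
  rcases eq_or_ne ξ 0 with rfl | hξ
  · simp [N.flux_zero hp, N.F_zero, Real.zero_rpow (sub_pos.2 hp).ne']
  · rw [flux, real_inner_smul_left]
    exact mul_le_mul_of_nonneg_left (N.inner_gradient_le hξ η) (Real.rpow_nonneg (N.F_nonneg ξ) _)

lemma polarF_flux_le (hp : 1 < p) (ξ : En n) : polarF N (N.flux p ξ) ≤ N.F ξ ^ (p - 1) :=
  N.polarF_le (Real.rpow_nonneg (N.F_nonneg ξ) _) fun η => by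
    rw [real_inner_comm, mul_comm]
    exact N.inner_flux_le hp ξ η

lemma continuous_flux (hp : 1 < p) : Continuous (N.flux p) := by
  have hp' : 0 < p - 1 := sub_pos.2 hp
  have hpow : Continuous fun ξ => N.F ξ ^ (p - 1) :=
    N.continuous_F.rpow_const fun _ => Or.inr hp'.le
  refine continuous_iff_continuousAt.2 fun ξ => ?_
  rcases eq_or_ne ξ 0 with rfl | hξ
  · obtain ⟨c, hc, hle⟩ := N.exists_pos_mul_norm_le_polarF
    rw [ContinuousAt, N.flux_zero hp]
    refine squeeze_zero_norm (a := fun ξ => c⁻¹ * N.F ξ ^ (p - 1)) (fun ξ => ?_) ?_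
    · rw [le_inv_mul_iff₀ hc]
      exact (hle _).trans (N.polarF_flux_le hp ξ)
    · simpa [N.F_zero, Real.zero_rpow hp'.ne'] using (hpow.const_mul c⁻¹).tendsto 0
  · exact hpow.continuousAt.smul (N.continuousAt_gradient_F hξ)

lemma inner_flux_lt {ξ η : En n} (hF : N.F ξ = N.F η) (hne : ξ ≠ η) :
    ⟪N.flux p ξ, η⟫ < N.F ξ ^ (p - 1) * N.F η := by
  have hξ : ξ ≠ 0 := by
    rintro rfl
    exact (N.pos η hne.symm).ne (N.F_zero ▸ hF)
  rw [flux, real_inner_smul_left]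
  exact mul_lt_mul_of_pos_left ((N.inner_gradient_le hξ η).lt_of_ne fun heq =>
    hne (N.eq_of_inner_gradient_eq hξ hF heq)) (Real.rpow_pos_of_pos (N.pos ξ hξ) _)

lemma inner_flux_sub_flux_pos (hp : 1 < p) {ξ η : En n} (hne : ξ ≠ η) :
    0 < ⟪N.flux p ξ - N.flux p η, ξ - η⟫ := by
  have hp' : 0 < p - 1 := sub_pos.2 hp
  have hpow : ∀ ζ, N.F ζ ^ p = N.F ζ ^ (p - 1) * N.F ζ := fun ζ => by
    rw [← Real.rpow_add_one' (N.F_nonneg ζ) (by linarith), sub_add_cancel]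
  have hξη := N.inner_flux_le hp ξ η
  have hηξ := N.inner_flux_le hp η ξ
  simp only [inner_sub_left, inner_sub_right, N.inner_flux_self hp, hpow]
  rcases eq_or_ne (N.F ξ) (N.F η) with hF | hF
  · have hlt := N.inner_flux_lt (p := p) hF hne
    rw [hF] at hlt hηξ ⊢
    linarith
  · have hprod : 0 < (N.F ξ ^ (p - 1) - N.F η ^ (p - 1)) * (N.F ξ - N.F η) := by
      rcases hF.lt_or_gt with hF | hF
      · exact mul_pos_of_neg_of_neg
          (sub_neg.2 (Real.rpow_lt_rpow (N.F_nonneg ξ) hF hp')) (sub_neg.2 hF)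
      · exact mul_pos (sub_pos.2 (Real.rpow_lt_rpow (N.F_nonneg η) hF hp')) (sub_pos.2 hF)
    nlinarith

end MinkowskiNorm

namespace MinkowskiNorm

/-- `w` solves the Finsler `p`-Laplace equation `div(F(∇w)^{p-1} F_ξ(∇w)) = 0` weakly in `U`. The
test functions are `C¹`, so that products with `C¹` functions are again admissible. -/
def IsPHarmonicOn {n : ℕ} (N : MinkowskiNorm n) (p : ℝ) (U : Set (En n)) (w : En n → ℝ) : Prop :=
  HasWeakDivergence U (fun x => N.flux p (gradient w x)) 0

namespace IsPHarmonicOn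

variable {n : ℕ} {N : MinkowskiNorm n} {p : ℝ} {U V : Set (En n)} {w w₁ w₂ : En n → ℝ}

lemma mono (hw : N.IsPHarmonicOn p V w) (hUV : U ⊆ V) : N.IsPHarmonicOn p U w :=
  HasWeakDivergence.mono hw hUV

protected lemma const (hp : 1 < p) (U : Set (En n)) (c : ℝ) : N.IsPHarmonicOn p U fun _ => c := by
  intro ψ _
  simp [N.flux_zero hp]

lemma const_mul (hw : N.IsPHarmonicOn p U w) {c : ℝ} (hc : 0 < c) :
    N.IsPHarmonicOn p U fun x => c * w x :=
  (HasWeakDivergence.const_smul hw (c ^ (p - 1))).congr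
    (fun x _ => by rw [gradient_const_mul, N.flux_smul hc]) fun x _ => by simp

lemma comp_add_right (hw : N.IsPHarmonicOn p U w) (a : En n) :
    N.IsPHarmonicOn p {x | x + a ∈ U} fun x => w (x + a) :=
  (HasWeakDivergence.comp_add_right hw a).congr
    (fun x _ => by rw [gradient_comp_add_right]) fun _ _ => rfl

lemma le_of_le_frontier [Nontrivial (En n)] (h₁ : N.IsPHarmonicOn p U w₁)
    (h₂ : N.IsPHarmonicOn p U w₂) (hp : 1 < p) (hU : IsOpen U) (hw₁ : ContDiffOn ℝ 1 w₁ U)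
    (hw₂ : ContDiffOn ℝ 1 w₂ U) (hcont₁ : ContinuousOn w₁ (closure U))
    (hcont₂ : ContinuousOn w₂ (closure U)) (hfr : ∀ x ∈ frontier U, w₁ x ≤ w₂ x)
    (hinf : ∀ ε, 0 < ε → ∀ᶠ x in cocompact (En n) ⊓ 𝓟 U, w₁ x ≤ w₂ x + ε)
    {x : En n} (hx : x ∈ closure U) : w₁ x ≤ w₂ x :=
  le_of_le_frontier_of_hasWeakDivergence hU (N.continuous_flux hp)
    (fun _ _ => N.inner_flux_sub_flux_pos hp) hw₁ hw₂ h₁ h₂ hcont₁ hcont₂ hfr hinf hx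

end IsPHarmonicOn

section ExpSubstitution

variable {n : ℕ} {N : MinkowskiNorm n} {p : ℝ} {Ω : Set (En n)} {u : En n → ℝ}

lemma hasWeakDivergence_flux_of_isWeakPSol (hp : 1 < p) (hΩ : IsOpen Ω)
    (hu : ContDiffOn ℝ 1 u Ω) (hsol : IsWeakPSol N Ω p u) :
    HasWeakDivergence Ω (fun x => N.flux p (gradient u x)) fun x => N.F (gradient u x) ^ p := by
  have hgrad := continuousOn_gradient_of_isOpen hΩ hu
  refine .of_contDiff hΩ ((N.continuous_flux hp).comp_continuousOn hgrad)
    ((N.continuous_F.comp_continuousOn hgrad).rpow_const fun _ _ => Or.inr (by linarith))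
    fun φ hφ hφΩ => ?_
  have h := hsol φ ⟨hφ, hφΩ.hasCompactSupport, hφΩ.tsupport_subset⟩
  rw [setIntegral_eq_integral_of_forall_compl_eq_zero fun x hx => by
      rw [hφΩ.gradient_eq_zero hx, inner_zero_right, mul_zero],
    setIntegral_eq_integral_of_forall_compl_eq_zero fun x hx => by
      rw [hφΩ.eq_zero hx, mul_zero]] at h
  simpa only [flux, real_inner_smul_left] using h

lemma flux_gradient_exp_neg_div {x : En n} (hp : 1 < p) (hu : DifferentiableAt ℝ u x) :
    N.flux p (gradient (fun y => Real.exp (-u y / (p - 1))) x) =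
      -((p - 1)⁻¹ ^ (p - 1)) • Real.exp (-u x) • N.flux p (gradient u x) := by
  have hp' : 0 < p - 1 := sub_pos.2 hp
  have hφ : HasDerivAt (fun t => Real.exp (-t / (p - 1)))
      (-(Real.exp (-u x / (p - 1)) * (p - 1)⁻¹)) (u x) := by
    simpa [neg_div] using ((hasDerivAt_neg (u x)).div_const (p - 1)).exp
  rw [(hasGradientAt_comp hφ hu.hasGradientAt).gradient, neg_smul, N.flux_neg,
    N.flux_smul (by positivity), Real.mul_rpow (by positivity) (by positivity), ← Real.exp_mul,
    div_mul_cancel₀ _ hp'.ne', neg_smul, smul_smul, mul_comm (Real.exp _)]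

-- For the flux `V` of `u`, the product rule gives
-- `div(e^{-u} V) = e^{-u} F(∇u)^p - e^{-u} ⟨V, ∇u⟩ = 0`.
lemma isPHarmonicOn_exp_neg_div (hp : 1 < p) (hΩ : IsOpen Ω) (hu : ContDiffOn ℝ 1 u Ω)
    (hdiv : HasWeakDivergence Ω (fun x => N.flux p (gradient u x))
      fun x => N.F (gradient u x) ^ p) :
    N.IsPHarmonicOn p Ω fun x => Real.exp (-u x / (p - 1)) := by
  have hgrad := continuousOn_gradient_of_isOpen hΩ hu
  have hud : ∀ x ∈ Ω, DifferentiableAt ℝ u x := fun x hx =>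
    (hasGradientAt_of_contDiffOn hΩ hu hx).differentiableAt
  have hproduct := hdiv.smul hΩ ((N.continuous_flux hp).comp_continuousOn hgrad)
    ((N.continuous_F.comp_continuousOn hgrad).rpow_const fun _ _ => Or.inr (by linarith))
    (a := fun x => Real.exp (-u x)) hu.neg.exp
  refine (hproduct.const_smul (-((p - 1)⁻¹ ^ (p - 1)))).congr
    (fun x hx => (flux_gradient_exp_neg_div hp (hud x hx)).symm) fun x hx => ?_
  have hφ : HasDerivAt (fun t => Real.exp (-t)) (-Real.exp (-u x)) (u x) := by
    simpa using (hasDerivAt_neg (u x)).exp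
  beta_reduce
  rw [(hasGradientAt_comp hφ (hud x hx).hasGradientAt).gradient, real_inner_smul_right,
    N.inner_flux_self hp]
  simp

end ExpSubstitution

section FundamentalSolution

variable {n : ℕ} (N : MinkowskiNorm n) {p R : ℝ}

lemma hasWeakDivergence_polarF_rpow_neg_smul :
    HasWeakDivergence {0}ᶜ (fun x : En n => polarF N x ^ (-(n : ℝ)) • x) 0 := by
  have hproduct := (hasWeakDivergence_id ({0}ᶜ : Set (En n))).smul isOpen_compl_singleton
    continuousOn_id continuousOn_const (a := fun x => polarF N x ^ (-(n : ℝ)))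
    (N.contDiffOn_polarF.rpow_const_of_ne fun x hx => (N.polarF_pos hx).ne')
  refine hproduct.congr (fun _ _ => rfl) fun x hx => ?_
  have hP := (N.polarF_pos hx).ne'
  beta_reduce
  rw [(hasGradientAt_comp (Real.hasDerivAt_rpow_const (p := -(n : ℝ)) (Or.inl hP))
      (N.hasGradientAt_polarF hx)).gradient, real_inner_smul_right, real_inner_comm,
    N.inner_polarDual hx, mul_assoc, ← Real.rpow_add_one hP, sub_add_cancel,
    finrank_euclideanSpace_fin, Pi.zero_apply]
  ring

/-- The fundamental solution of the Finsler `p`-Laplace equation, normalised to be `1` on the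
boundary of the Wulff shape of radius `R` centered at the origin. -/
def fundSol (p R : ℝ) (x : En n) : ℝ := (polarF N x / R) ^ (-((n - p) / (p - 1)))

lemma contDiffOn_fundSol (p : ℝ) (hR : 0 < R) : ContDiffOn ℝ 1 (N.fundSol p R) {0}ᶜ :=
  (N.contDiffOn_polarF.div_const R).rpow_const_of_ne
    fun _ hx => (div_pos (N.polarF_pos hx) hR).ne'

lemma gradient_fundSol (p : ℝ) (hR : 0 < R) {x : En n} (hx : x ≠ 0) :
    gradient (N.fundSol p R) x = -(((n - p) / (p - 1) / R *
      (polarF N x / R) ^ (-((n - p) / (p - 1)) - 1)) • N.polarDual x) := by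
  have hφ := ((hasDerivAt_id (polarF N x)).div_const R).rpow_const (p := -((n - p) / (p - 1)))
    (Or.inl (div_pos (N.polarF_pos hx) hR).ne')
  refine (hasGradientAt_comp hφ (N.hasGradientAt_polarF hx)).gradient.trans ?_
  rw [← neg_smul]
  congr 1
  simp only [id_eq]
  ring

lemma flux_gradient_fundSol (hp : 1 < p) (hpn : p < n) (hR : 0 < R) {x : En n} (hx : x ≠ 0) :
    N.flux p (gradient (N.fundSol p R) x) =
      -(((n - p) / (p - 1) / R) ^ (p - 1) * R ^ ((n : ℝ) - 1)) •
        polarF N x ^ (-(n : ℝ)) • x := by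
  have hP := N.polarF_pos hx
  have hγ : 0 < (n - p) / (p - 1) / R := div_pos (div_pos (sub_pos.2 hpn) (sub_pos.2 hp)) hR
  have hexp : (-((n - p) / (p - 1)) - 1) * (p - 1) = -(n : ℝ) + 1 := by
    field_simp [(sub_pos.2 hp).ne']
    ring
  have hpow : (polarF N x / R) ^ (-(n : ℝ) + 1) * (polarF N x)⁻¹ =
      R ^ ((n : ℝ) - 1) * polarF N x ^ (-(n : ℝ)) := by
    rw [Real.div_rpow hP.le hR.le, Real.rpow_add_one hP.ne',
      show -(n : ℝ) + 1 = -((n : ℝ) - 1) by ring, Real.rpow_neg hR.le]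
    field_simp
  rw [N.gradient_fundSol p hR hx, N.flux_neg, N.flux_smul (by positivity), flux,
    N.F_polarDual hx, Real.one_rpow, one_smul, N.gradient_F_polarDual hx,
    Real.mul_rpow hγ.le (by positivity), ← Real.rpow_mul (by positivity), hexp, neg_smul, neg_inj,
    smul_smul, smul_smul, mul_assoc, mul_assoc, hpow]

lemma isPHarmonicOn_fundSol (hp : 1 < p) (hpn : p < n) (hR : 0 < R) :
    N.IsPHarmonicOn p {0}ᶜ (N.fundSol p R) :=
  (N.hasWeakDivergence_polarF_rpow_neg_smul.const_smul _).congr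
    (fun _ hx => (N.flux_gradient_fundSol hp hpn hR hx).symm) fun _ _ => by simp

lemma tendsto_fundSol_cocompact (hp : 1 < p) (hpn : p < n) (hR : 0 < R) :
    Tendsto (N.fundSol p R) (cocompact (En n)) (𝓝 0) :=
  (tendsto_rpow_neg_atTop (div_pos (sub_pos.2 hpn) (sub_pos.2 hp))).comp
    (N.tendsto_polarF_cocompact.atTop_div_const hR)

lemma fundSol_le_one (hp : 1 < p) (hpn : p < n) (hR : 0 < R) {x : En n}
    (hx : R ≤ polarF N x) : N.fundSol p R x ≤ 1 :=
  Real.rpow_le_one_of_one_le_of_nonpos ((one_le_div hR).2 hx)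
    (neg_nonpos.2 (div_pos (sub_pos.2 hpn) (sub_pos.2 hp)).le)

lemma exp_le_fundSol (hp : 1 < p) (hpn : p < n) (hR : 0 < R) {s : ℝ} {x : En n}
    (hx : x ≠ 0) (hxs : polarF N x ≤ R + s) :
    Real.exp (-((n - p) / R * s) / (p - 1)) ≤ N.fundSol p R x := by
  have hratio : 0 < polarF N x / R := div_pos (N.polarF_pos hx) hR
  have hγ : 0 ≤ (n - p) / (p - 1) := (div_pos (sub_pos.2 hpn) (sub_pos.2 hp)).le
  have hlog : Real.log (polarF N x / R) ≤ s / R := by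
    calc Real.log (polarF N x / R) ≤ polarF N x / R - 1 := Real.log_le_sub_one_of_pos hratio
      _ ≤ (R + s) / R - 1 := by gcongr
      _ = s / R := by field_simp; ring
  rw [fundSol, Real.rpow_def_of_pos hratio, Real.exp_le_exp]
  calc -((n - p) / R * s) / (p - 1) = -((n - p) / (p - 1) * (s / R)) := by ring
    _ ≤ -((n - p) / (p - 1) * Real.log (polarF N x / R)) :=
      neg_le_neg (mul_le_mul_of_nonneg_left hlog hγ)
    _ = Real.log (polarF N x / R) * -((n - p) / (p - 1)) := by ring

lemma le_polarF_of_wulff_subset_compl {Ω : Set (En n)} {x₀ : En n} (hW : Wulff N R x₀ ⊆ Ωᶜ)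
    {x : En n} (hx : x ∈ closure Ω) : R ≤ polarF N (x - x₀) := by
  have hclosed : IsClosed {y : En n | R ≤ polarF N (y - x₀)} :=
    isClosed_le continuous_const (N.continuous_polarF.comp (by fun_prop))
  have hsub : Ω ⊆ {y : En n | R ≤ polarF N (y - x₀)} := fun y hy =>
    show R ≤ polarF N (y - x₀) from not_lt.1 fun hlt => hW hlt hy
  exact closure_minimal hsub hclosed hx

lemma polarF_le_of_mem_frontier_wulff {x₀ x : En n} (hx : x ∈ frontier (Wulff N R x₀)) :
    polarF N (x - x₀) ≤ R := by
  have hclosed : IsClosed {y : En n | polarF N (y - x₀) ≤ R} :=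
    isClosed_le (N.continuous_polarF.comp (by fun_prop)) continuous_const
  exact closure_minimal (fun y (hy : polarF N (y - x₀) < R) => hy.le) hclosed hx.1

end FundamentalSolution

end MinkowskiNorm

/-- A `p`-capacitary potential of the complement of `Ω`: a solution in `Ω` of the Finsler
`p`-Laplace equation with boundary value `1`, decaying at infinity. -/
structure IsPCapacitary {n : ℕ} (N : MinkowskiNorm n) (Ω : Set (En n)) (p : ℝ)
    (v : En n → ℝ) : Prop where
  contDiffOn : ContDiffOn ℝ 1 v Ω
  continuousOn : ContinuousOn v (closure Ω)
  isPHarmonicOn : N.IsPHarmonicOn p Ω v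
  nonneg : ∀ x ∈ closure Ω, 0 ≤ v x
  eq_one : ∀ x ∈ frontier Ω, v x = 1
  tendsto_zero : Tendsto v (cocompact (En n) ⊓ 𝓟 Ω) (𝓝 0)

lemma nontrivial_euclideanSpace_of_lt {n : ℕ} {p : ℝ} (hp : 1 < p) (hpn : p < n) :
    Nontrivial (En n) := by
  have hn : (1 : ℝ) < n := hp.trans hpn
  have : NeZero n := ⟨by rintro rfl; norm_num at hn⟩
  infer_instance

lemma MinkowskiNorm.exp_neg_mul_polarF_div_le_one {n : ℕ} (N : MinkowskiNorm n) {p R : ℝ}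
    (hp : 1 < p) (hpn : p ≤ n) (hR : 0 ≤ R) (x : En n) :
    Real.exp (-((n - p) / R * polarF N x) / (p - 1)) ≤ 1 :=
  Real.exp_le_one_iff.2 (div_nonpos_of_nonpos_of_nonneg (neg_nonpos.2 (mul_nonneg
    (div_nonneg (sub_nonneg.2 hpn) hR) (N.polarF_nonneg x))) (sub_pos.2 hp).le)

namespace IsPCapacitary

variable {n : ℕ} {N : MinkowskiNorm n} {Ω : Set (En n)} {p R : ℝ} {v : En n → ℝ}

lemma le_one [Nontrivial (En n)] (hv : IsPCapacitary N Ω p v) (hΩ : IsOpen Ω) (hp : 1 < p)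
    {x : En n} (hx : x ∈ closure Ω) : v x ≤ 1 := by
  refine hv.isPHarmonicOn.le_of_le_frontier (.const hp Ω 1) hp hΩ hv.contDiffOn contDiffOn_const
    hv.continuousOn continuousOn_const (fun y hy => (hv.eq_one y hy).le) (fun ε hε => ?_) hx
  filter_upwards [hv.tendsto_zero.eventually_le_const hε] with y hy
  linarith

lemma fundSol_le (hv : IsPCapacitary N Ω p v) (hΩ : IsOpen Ω) (hp : 1 < p) (hpn : p < n)
    (hR : 0 < R) {x₀ : En n} (hW : Wulff N R x₀ ⊆ Ωᶜ) {x : En n} (hx : x ∈ closure Ω) :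
    N.fundSol p R (x - x₀) ≤ v x := by
  have := nontrivial_euclideanSpace_of_lt hp hpn
  have hR_le : ∀ y ∈ closure Ω, R ≤ polarF N (y - x₀) := fun y hy =>
    N.le_polarF_of_wulff_subset_compl hW hy
  have hne : ∀ y ∈ closure Ω, y - x₀ ∈ ({0}ᶜ : Set (En n)) := by
    rintro y hy (hzero : y - x₀ = 0)
    have := hR_le y hy
    rw [hzero, N.polarF_zero] at this
    linarith
  have hsmooth : ContDiffOn ℝ 1 (fun y => N.fundSol p R (y - x₀)) {y | y - x₀ ∈ ({0}ᶜ : Set _)} :=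
    (N.contDiffOn_fundSol p hR).comp (by fun_prop) fun y hy => hy
  have hharmonic : N.IsPHarmonicOn p {y | y - x₀ ∈ ({0}ᶜ : Set _)}
      fun y => N.fundSol p R (y - x₀) := by
    simpa only [← sub_eq_add_neg] using (N.isPHarmonicOn_fundSol hp hpn hR).comp_add_right (-x₀)
  have hne_interior : Ω ⊆ {y | y - x₀ ∈ ({0}ᶜ : Set _)} := fun y hy => hne y (subset_closure hy)
  have htendsto : Tendsto (fun y => N.fundSol p R (y - x₀)) (cocompact (En n)) (𝓝 0) :=
    (N.tendsto_fundSol_cocompact hp hpn hR).comp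
      (Homeomorph.subRight x₀).isClosedEmbedding.tendsto_cocompact
  refine (hharmonic.mono hne_interior).le_of_le_frontier hv.isPHarmonicOn hp hΩ
    (hsmooth.mono hne_interior) hv.contDiffOn (hsmooth.continuousOn.mono hne) hv.continuousOn
    (fun y hy => ?_) (fun ε hε => ?_) hx
  · rw [hv.eq_one y hy]
    exact N.fundSol_le_one hp hpn hR (hR_le y hy.1)
  · filter_upwards [(htendsto.eventually_le_const hε).filter_mono inf_le_left,
      mem_inf_of_right (mem_principal_self Ω)] with y hy hyΩ
    linarith [hv.nonneg y (subset_closure hyΩ)]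

lemma exp_mul_le_of_mem_frontier_or (hv : IsPCapacitary N Ω p v) (hΩ : IsOpen Ω) (hp : 1 < p)
    (hpn : p < n) (hR : 0 < R)
    (htouch : ∀ x ∈ frontier Ω, ∃ x₀ : En n, Wulff N R x₀ ⊆ Ωᶜ ∧ x ∈ frontier (Wulff N R x₀))
    {x y : En n} (hx : x ∈ closure Ω) (hy : y ∈ closure Ω)
    (hxy : x ∈ frontier Ω ∨ y ∈ frontier Ω) :
    Real.exp (-((n - p) / R * polarF N (y - x)) / (p - 1)) * v x ≤ v y := by
  have := nontrivial_euclideanSpace_of_lt hp hpn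
  rcases hxy with hxf | hyf
  · obtain ⟨x₀, hW, hx₀⟩ := htouch x hxf
    have hpolar := N.le_polarF_of_wulff_subset_compl hW hy
    rw [hv.eq_one x hxf, mul_one]
    refine (N.exp_le_fundSol hp hpn hR (fun hzero => ?_) ?_).trans
      (hv.fundSol_le hΩ hp hpn hR hW hy)
    · rw [hzero, N.polarF_zero] at hpolar
      linarith
    · calc polarF N (y - x₀) ≤ polarF N (x - x₀) + polarF N (y - x) := by
            simpa using N.polarF_add_le (x - x₀) (y - x)
        _ ≤ R + polarF N (y - x) := by gcongr; exact N.polarF_le_of_mem_frontier_wulff hx₀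
  · rw [hv.eq_one y hyf]
    exact mul_le_one₀ (N.exp_neg_mul_polarF_div_le_one hp hpn.le hR.le _) (hv.nonneg x hx)
      (hv.le_one hΩ hp hx)

-- The comparison principle for `v` and its translate by `h`, on the intersection of their domains.
lemma exp_mul_le_add (hv : IsPCapacitary N Ω p v) (hΩ : IsOpen Ω) (hp : 1 < p) (hpn : p < n)
    (hR : 0 < R)
    (htouch : ∀ x ∈ frontier Ω, ∃ x₀ : En n, Wulff N R x₀ ⊆ Ωᶜ ∧ x ∈ frontier (Wulff N R x₀))
    {x h : En n} (hx : x ∈ Ω) (hxh : x + h ∈ Ω) :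
    Real.exp (-((n - p) / R * polarF N h) / (p - 1)) * v x ≤ v (x + h) := by
  have := nontrivial_euclideanSpace_of_lt hp hpn
  set Ω' : Set (En n) := {z | z + h ∈ Ω}
  have hclosure : closure Ω' = {z | z + h ∈ closure Ω} :=
    ((Homeomorph.addRight h).preimage_closure Ω).symm
  have hfrontier : frontier Ω' = {z | z + h ∈ frontier Ω} :=
    ((Homeomorph.addRight h).preimage_frontier Ω).symm
  have hclosure_inter : ∀ z ∈ closure (Ω ∩ Ω'), z ∈ closure Ω ∧ z + h ∈ closure Ω := fun z hz =>
    ⟨closure_mono inter_subset_left hz, hclosure.subset (closure_mono inter_subset_right hz)⟩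
  refine ((hv.isPHarmonicOn.mono inter_subset_left).const_mul (Real.exp_pos _)).le_of_le_frontier
    ((hv.isPHarmonicOn.comp_add_right h).mono inter_subset_right) hp
    (hΩ.inter (hΩ.preimage (by fun_prop)))
    (contDiffOn_const.mul (hv.contDiffOn.mono inter_subset_left))
    (hv.contDiffOn.comp (by fun_prop) fun z hz => hz.2)
    (continuousOn_const.mul (hv.continuousOn.mono fun z hz => (hclosure_inter z hz).1))
    (hv.continuousOn.comp (by fun_prop) fun z hz => (hclosure_inter z hz).2)
    (fun z hz => ?_) (fun ε hε => ?_) (subset_closure ⟨hx, hxh⟩)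
  · have hz_or : z ∈ frontier Ω ∨ z + h ∈ frontier Ω :=
      (frontier_inter_subset Ω Ω' hz).imp (fun hz' => hz'.1) fun hz' => hfrontier.subset hz'.2
    have hz_closure := hclosure_inter z hz.1
    simpa using hv.exp_mul_le_of_mem_frontier_or hΩ hp hpn hR htouch hz_closure.1 hz_closure.2 hz_or
  · filter_upwards [(hv.tendsto_zero.eventually_le_const hε).filter_mono
      (inf_le_inf_left _ (principal_mono.2 inter_subset_left)),
      mem_inf_of_right (mem_principal_self (Ω ∩ Ω'))] with z hzε hz
    have hdecay := mul_le_of_le_one_left (hv.nonneg z (subset_closure hz.1))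
      (N.exp_neg_mul_polarF_div_le_one hp hpn.le hR.le h)
    linarith [hv.nonneg (z + h) (subset_closure hz.2)]

lemma exp_mul_le (hv : IsPCapacitary N Ω p v) (hΩ : IsOpen Ω) (hp : 1 < p) (hpn : p < n)
    (hR : 0 < R)
    (htouch : ∀ x ∈ frontier Ω, ∃ x₀ : En n, Wulff N R x₀ ⊆ Ωᶜ ∧ x ∈ frontier (Wulff N R x₀))
    {x y : En n} (hx : x ∈ closure Ω) (hy : y ∈ closure Ω) :
    Real.exp (-((n - p) / R * polarF N (y - x)) / (p - 1)) * v x ≤ v y := by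
  by_cases hxy : x ∈ frontier Ω ∨ y ∈ frontier Ω
  · exact hv.exp_mul_le_of_mem_frontier_or hΩ hp hpn hR htouch hx hy hxy
  · push Not at hxy
    rw [closure_eq_self_union_frontier] at hx hy
    simpa using hv.exp_mul_le_add (h := y - x) hΩ hp hpn hR htouch (hx.resolve_right hxy.1)
      (by simpa using hy.resolve_right hxy.2)

end IsPCapacitary

section GradientBound

variable {n : ℕ} {N : MinkowskiNorm n} {Ω : Set (En n)} {p R : ℝ} {u : En n → ℝ}

lemma isPCapacitary_exp_neg_div (hΩ : IsOpen Ω) (hp : 1 < p) (hu : ContDiffOn ℝ 1 u Ω)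
    (hcont : ContinuousOn u (closure Ω)) (hsol : IsWeakPSol N Ω p u)
    (hbc : ∀ x ∈ frontier Ω, u x = 0) (hlim : Tendsto u (cocompact (En n) ⊓ 𝓟 Ω) atTop) :
    IsPCapacitary N Ω p fun x => Real.exp (-u x / (p - 1)) where
  contDiffOn := (hu.neg.div_const _).exp
  continuousOn := Real.continuous_exp.comp_continuousOn (hcont.neg.div_const _)
  isPHarmonicOn := MinkowskiNorm.isPHarmonicOn_exp_neg_div hp hΩ hu
    (MinkowskiNorm.hasWeakDivergence_flux_of_isWeakPSol hp hΩ hu hsol)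
  nonneg _ _ := (Real.exp_pos _).le
  eq_one x hx := by simp [hbc x hx]
  tendsto_zero := Real.tendsto_exp_atBot.comp
    ((tendsto_neg_atTop_atBot.comp hlim).atBot_div_const (sub_pos.2 hp))

lemma IsWeakPSol.sub_le_mul_polarF (hsol : IsWeakPSol N Ω p u) (hΩ : IsOpen Ω) (hp : 1 < p)
    (hpn : p < n) (hu : ContDiffOn ℝ 1 u Ω) (hcont : ContinuousOn u (closure Ω))
    (hbc : ∀ x ∈ frontier Ω, u x = 0) (hlim : Tendsto u (cocompact (En n) ⊓ 𝓟 Ω) atTop)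
    (hR : 0 < R)
    (htouch : ∀ x ∈ frontier Ω, ∃ x₀ : En n, Wulff N R x₀ ⊆ Ωᶜ ∧ x ∈ frontier (Wulff N R x₀))
    {x y : En n} (hx : x ∈ closure Ω) (hy : y ∈ closure Ω) :
    u y - u x ≤ (n - p) / R * polarF N (y - x) := by
  have hexp := (isPCapacitary_exp_neg_div hΩ hp hu hcont hsol hbc hlim).exp_mul_le
    hΩ hp hpn hR htouch hx hy
  rw [← Real.exp_add, Real.exp_le_exp, ← add_div,
    div_le_div_iff_of_pos_right (sub_pos.2 hp)] at hexp
  linarith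

lemma HasSmoothBoundary.mem_posTangentConeAt_or_neg_mem (hΩ : HasSmoothBoundary Ω) {x : En n}
    (hx : x ∈ closure Ω) (d : En n) :
    d ∈ posTangentConeAt Ω x ∨ -d ∈ posTangentConeAt Ω x := by
  obtain ⟨f, hf, rfl, hf'⟩ := hΩ
  have hopen : IsOpen {y | f y < 0} := isOpen_lt hf.continuous continuous_const
  rw [closure_eq_self_union_frontier] at hx
  rcases hx with hx | hx
  · refine Or.inl (mem_posTangentConeAt_of_frequently_mem (Eventually.frequently ?_))
    have hlim : Tendsto (fun t : ℝ => x + t • d) (𝓝[>] 0) (𝓝 x) := by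
      have hcont : Continuous fun t : ℝ => x + t • d := by fun_prop
      simpa using (hcont.tendsto 0).mono_left nhdsWithin_le_nhds
    exact hlim.eventually (hopen.mem_nhds hx)
  · have hfx : f x = 0 := frontier_lt_subset_eq hf.continuous continuous_const hx
    have hderiv := (hf.differentiable (by simp) x).hasFDerivAt
    rw [← hfx]
    refine (le_total (fderiv ℝ f x d) 0).imp
      (mem_posTangentConeAt_lt_of_apply_nonpos hderiv (hf' x hx)) fun hd => ?_
    exact mem_posTangentConeAt_lt_of_apply_nonpos hderiv (hf' x hx) (by simpa using hd)

-- `gradient u x` is `0` where `u` is not differentiable, as may happen on the boundary of `Ω`.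
lemma MinkowskiNorm.F_gradient_le_of_forall_hasGradientWithinAt {x : En n} {C : ℝ} (hC : 0 ≤ C)
    (h : ∀ g, HasGradientWithinAt u g Ω x → N.F g ≤ C) : N.F (gradient u x) ≤ C := by
  by_cases hu : DifferentiableAt ℝ u x
  · exact h _ (hasGradientWithinAt_iff_hasFDerivWithinAt.2
      hu.hasGradientAt.hasFDerivAt.hasFDerivWithinAt)
  · rwa [gradient_eq_zero_of_not_differentiableAt hu, N.F_zero]

end GradientBound

theorem statement13_general (n : ℕ) (N : MinkowskiNorm n) (Ω : Set (En n)) (hΩ : IsOpen Ω)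
    (p : ℝ) (hp1 : 1 < p) (hpn : p < n) (u : En n → ℝ) (hu : ContDiffOn ℝ 1 u Ω)
    (hcont : ContinuousOn u (closure Ω)) (hsol : IsWeakPSol N Ω p u)
    (hbc : ∀ x ∈ frontier Ω, u x = 0) (hlim : Tendsto u (cocompact (En n) ⊓ 𝓟 Ω) atTop)
    (R : ℝ) (hR : 0 < R)
    (htouch : ∀ x ∈ frontier Ω, ∃ x₀ : En n, Wulff N R x₀ ⊆ Ωᶜ ∧ x ∈ frontier (Wulff N R x₀)) :
    ∀ x ∈ closure Ω, (∀ d, d ∈ posTangentConeAt Ω x ∨ -d ∈ posTangentConeAt Ω x) →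
      ∀ g, HasGradientWithinAt u g Ω x → N.F g ≤ (n - p) / R := by
  intro x hx hcone g hg
  have hlip : ∀ y ∈ closure Ω, ∀ z ∈ closure Ω, u z - u y ≤ (n - p) / R * polarF N (z - y) :=
    fun y hy z hz => hsol.sub_le_mul_polarF hΩ hp1 hpn hu hcont hbc hlim hR htouch hy hz
  refine N.F_le_of_inner_le (div_pos (sub_pos.2 hpn) hR).le fun d => ?_
  exact apply_le_of_mem_posTangentConeAt_or_neg_mem hg.hasFDerivWithinAt
    (P := fun e => (n - p) / R * polarF N e) (continuous_const.mul N.continuous_polarF)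
    (fun c hc e => by rw [N.polarF_smul c hc, mul_left_comm])
    (fun y hy => hlip x hx y (subset_closure hy)) (fun y hy => hlip y (subset_closure hy) x hx)
    (hcone d)

/-- Global gradient estimate: if `R > 0` is such that every boundary
point of `Ω` is touched from inside `Ωᶜ` by a Wulff shape of radius `R`, then
`F(∇u_p) ≤ (n-p)/R` on the closure of `Ω`. -/
theorem statement13 (n : ℕ) (N : MinkowskiNorm n)
    (Ω : Set (En n)) (hΩ : IsOpen Ω) (hsb : HasSmoothBoundary Ω)
    (hbd : Bornology.IsBounded Ωᶜ)
    (p : ℝ) (hp1 : 1 < p) (hpn : p < n)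
    (u : En n → ℝ) (hC1 : ContDiffOn ℝ 1 u (closure Ω))
    (hsol : IsWeakPSol N Ω p u)
    (hbc : ∀ x ∈ frontier Ω, u x = 0)
    (hlim : Tendsto u (cocompact (En n)) atTop)
    (R : ℝ) (hR : 0 < R)
    (htouch : ∀ x ∈ frontier Ω, ∃ x₀ : En n,
      Wulff N R x₀ ⊆ Ωᶜ ∧ x ∈ frontier (Wulff N R x₀)) :
    ∀ x ∈ closure Ω, N.F (gradient u x) ≤ (n - p) / R :=
  fun x hx => MinkowskiNorm.F_gradient_le_of_forall_hasGradientWithinAt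
    (div_pos (sub_pos.2 hpn) hR).le (statement13_general n N Ω hΩ p hp1 hpn u
      (hC1.mono subset_closure) hC1.continuousOn hsol hbc (hlim.mono_left inf_le_left) R hR htouch
      x hx (hsb.mem_posTangentConeAt_or_neg_mem hx))
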